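/- arXiv:math/0607461 — 7 statements merged into one kernel-verified Lean document; each statement's English description precedes it below -/
import Mathlib

section
/- Under Assumptions 1 and 3, let t̄ ∈ [0,T) and x̄ ∈ ℝⁿ be such that ∇ₓf(t̄,x̄) = 0 and ∇²ₓf(t̄,x̄) is positive definite. Then there exist t̂ ∈ (t̄,T] and a function u : [t̄,t̂) → ℝⁿ of class C² such that u(t̄) = x̄, ∇ₓf(t,u(t)) = 0 and ∇²ₓf(t,u(t)) is positive definite for every t ∈ [t̄,t̂); moreover the limit x̂ := lim_{t→t̂⁻} u(t) exists, and either t̂ = T or (t̂, x̂) ∈ Z_f (so in particular t̂ ∈ Π(Z_f)). -/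
open Set Filter Topology
open scoped RealInnerProductSpace

/-- The set of pairs `(t, ξ)` with `t ∈ [0,T]` such that `ξ` is a degenerate critical
point of `f t`. -/
noncomputable def degenerateCriticalSet {n : ℕ} (T : ℝ)
    (f : ℝ → EuclideanSpace ℝ (Fin n) → ℝ) :
    Set (ℝ × EuclideanSpace ℝ (Fin n)) :=
  {p | p.1 ∈ Set.Icc 0 T ∧ gradient (f p.1) p.2 = 0 ∧
    LinearMap.det ((fderiv ℝ (gradient (f p.1)) p.2 :
      EuclideanSpace ℝ (Fin n) →L[ℝ] EuclideanSpace ℝ (Fin n)) :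
      EuclideanSpace ℝ (Fin n) →ₗ[ℝ] EuclideanSpace ℝ (Fin n)) = 0}

section aux
variable {n : ℕ}
local notation "𝔼" => EuclideanSpace ℝ (Fin n)

lemma partial_hasFDerivAt {F : Type*} [NormedAddCommGroup F] [NormedSpace ℝ F] {T : ℝ}
    (φ : ℝ → 𝔼 → F) {k : ℕ} (hk : 1 ≤ k)
    (hφ : ContDiffOn ℝ k (Function.uncurry φ) (Icc 0 T ×ˢ univ)) {t : ℝ} (ht : t ∈ Icc 0 T) (x : 𝔼) :
    HasFDerivAt (φ t) ((fderivWithin ℝ (Function.uncurry φ) (Icc 0 T ×ˢ univ) (t,x)).comp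
      (ContinuousLinearMap.inr ℝ ℝ 𝔼)) x := by
  have h1 : HasFDerivWithinAt (Function.uncurry φ) _ (Icc 0 T ×ˢ univ) (t,x) :=
    ((hφ.differentiableOn (by exact_mod_cast (by omega : k ≠ 0))) (t,x) ⟨ht, mem_univ _⟩).hasFDerivWithinAt
  have h2 : HasFDerivAt (fun y : 𝔼 => (t, y)) (ContinuousLinearMap.inr ℝ ℝ 𝔼) x :=
    hasFDerivAt_prodMk_right t x
  have := h1.comp (s := univ) x (h2.hasFDerivWithinAt) (fun y _ => ⟨ht, mem_univ _⟩)
  rw [hasFDerivWithinAt_univ] at this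
  exact this

lemma partial_contDiffOn {F : Type*} [NormedAddCommGroup F] [NormedSpace ℝ F] {T : ℝ} (hT : 0 < T)
    (φ : ℝ → 𝔼 → F) {k : ℕ}
    (hφ : ContDiffOn ℝ (k+1 : ℕ) (Function.uncurry φ) (Icc 0 T ×ˢ univ)) :
    ContDiffOn ℝ k (Function.uncurry fun t x => fderiv ℝ (φ t) x) (Icc 0 T ×ˢ univ) := by
  have hS : UniqueDiffOn ℝ (Icc 0 T ×ˢ (univ : Set 𝔼)) := (uniqueDiffOn_Icc hT).prod uniqueDiffOn_univ
  have h := hφ.fderivWithin (m := k) hS (by norm_cast)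
  refine (h.clm_comp (contDiffOn_const (c := ContinuousLinearMap.inr ℝ ℝ 𝔼))).congr ?_
  rintro ⟨t, x⟩ ⟨ht, -⟩
  exact (partial_hasFDerivAt φ (by omega) hφ ht x).fderiv

lemma grad_contDiffOn {T : ℝ} (hT : 0 < T) (f : ℝ → 𝔼 → ℝ) 
    (hf : ContDiffOn ℝ 3 (Function.uncurry f) (Icc 0 T ×ˢ univ)) :
    ContDiffOn ℝ 2 (Function.uncurry fun t x => gradient (f t) x) (Icc 0 T ×ˢ univ) := by
  have := partial_contDiffOn (k := 2) hT f (by exact_mod_cast hf)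
  have h2 := (InnerProductSpace.toDual ℝ 𝔼).symm.toContinuousLinearEquiv.contDiff (n := 2)
  exact h2.comp_contDiffOn (by exact_mod_cast this)

lemma hess_symm {T : ℝ} (hT : 0 < T) (f : ℝ → 𝔼 → ℝ)
    (hf : ContDiffOn ℝ 3 (Function.uncurry f) (Icc 0 T ×ˢ univ)) {t : ℝ} (ht : t ∈ Icc 0 T) (x y z : 𝔼) :
    ⟪fderiv ℝ (gradient (f t)) x y, z⟫ = ⟪fderiv ℝ (gradient (f t)) x z, y⟫ := by
  have h1 : ContDiff ℝ 3 (f t) := by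
    rw [← contDiffOn_univ]
    exact hf.comp (t := Icc 0 T ×ˢ univ) (f := fun y : 𝔼 => (t, y)) (by fun_prop) (fun y _ => ⟨ht, mem_univ _⟩)
  have h2 : IsSymmSndFDerivAt ℝ (f t) x := h1.contDiffAt.isSymmSndFDerivAt (by simp; norm_num)
  have hG := grad_contDiffOn hT f hf
  have hGd : DifferentiableAt ℝ (gradient (f t)) x :=
    (partial_hasFDerivAt (k := 2) (fun t x => gradient (f t) x) (by norm_num) (by exact_mod_cast hG) ht x).differentiableAt
  have h4 : DifferentiableAt ℝ (fderiv ℝ (f t)) x :=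
    ((h1.fderiv_right (m := 2) (by norm_num)).differentiable (by norm_num)) x
  have h3 : ∀ y z, ⟪fderiv ℝ (gradient (f t)) x y, z⟫ = fderiv ℝ (fderiv ℝ (f t)) x y z := by
    intro y z
    have e1 : (fun x' => ⟪gradient (f t) x', z⟫) = fun x' => fderiv ℝ (f t) x' z := by
      funext x'
      simp [gradient]
    have e2 := congrArg (fun g => fderiv ℝ g x y) e1
    rw [fderiv_inner_apply ℝ hGd (differentiableAt_const z), fderiv_clm_apply h4 (differentiableAt_const z)] at e2
    simpa using e2
  rw [h3, h3]
  exact h2 y z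

/-- strict positivity gives coercivity -/
lemma coercive_of_pos (A : 𝔼 →L[ℝ] 𝔼) (hA : ∀ y, y ≠ 0 → 0 < ⟪A y, y⟫) :
    ∃ m > 0, ∀ y, 2 * m * ‖y‖^2 ≤ ⟪A y, y⟫ := by
  obtain ⟨c, hc, h⟩ := (isCompact_sphere (0:𝔼) 1).exists_forall_le' (f := fun y => ⟪A y, y⟫) (a := 0)
    (by fun_prop) (fun y hy => hA y (by rintro rfl; simp at hy))
  refine ⟨c/2, by linarith, fun y => ?_⟩
  by_cases hy : y = 0
  · simp [hy]
  have hn : 0 < ‖y‖ := norm_pos_iff.2 hy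
  have := h (‖y‖⁻¹ • y) (by simp [norm_smul, hn.ne'])
  simp only [map_smul, inner_smul_left, inner_smul_right] at this
  simp at this
  field_simp at this
  linarith

lemma local_branch {T : ℝ} (hT : 0 < T) (f : ℝ → 𝔼 → ℝ)
    (hf : ContDiffOn ℝ 3 (Function.uncurry f) (Icc 0 T ×ˢ univ)) {t₀ : ℝ} (ht₀ : t₀ ∈ Icc 0 T)
    {x₀ : 𝔼} (hcrit : gradient (f t₀) x₀ = 0)
    (hpd : ∀ y : 𝔼, y ≠ 0 → 0 < ⟪(fderiv ℝ (gradient (f t₀)) x₀) y, y⟫) :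
    ∃ δ > 0, ∃ r > 0, ∃ v : ℝ → 𝔼, ContinuousOn v (Ioo (t₀ - δ) (t₀ + δ) ∩ Icc 0 T) ∧
      ∀ t ∈ Ioo (t₀ - δ) (t₀ + δ) ∩ Icc 0 T, v t ∈ Metric.ball x₀ r ∧ gradient (f t) (v t) = 0 ∧ 
        (∀ y : 𝔼, y ≠ 0 → 0 < ⟪(fderiv ℝ (gradient (f t)) (v t)) y, y⟫) ∧
        ∀ x ∈ Metric.ball x₀ r, gradient (f t) x = 0 → x = v t := by
  obtain ⟨m, hm, hco⟩ := coercive_of_pos _ hpd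
  set H₀ := fderiv ℝ (gradient (f t₀)) x₀ with hH₀
  have hG := grad_contDiffOn hT f hf
  have hH := partial_contDiffOn (k := 1) hT (fun t x => gradient (f t) x) (by exact_mod_cast hG)
  have hmem : (t₀, x₀) ∈ Icc 0 T ×ˢ (univ : Set 𝔼) := ⟨ht₀, mem_univ _⟩
  obtain ⟨ε, hε, hball⟩ := Metric.continuousWithinAt_iff.1 (hH.continuousOn _ hmem) m hm
  have hfd : ∀ t ∈ Icc 0 T, ∀ x, HasGradientAt (f t) (gradient (f t) x) x := fun t ht x =>
    (partial_hasFDerivAt (k := 3) f (by norm_num) (by exact_mod_cast hf) ht x).differentiableAt.hasGradientAt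
  have hGd : ∀ t ∈ Icc 0 T, ∀ x, HasFDerivAt (gradient (f t)) (fderiv ℝ (gradient (f t)) x) x := fun t ht x =>
    (partial_hasFDerivAt (k := 2) (fun t x => gradient (f t) x) (by norm_num) (by exact_mod_cast hG) ht x).differentiableAt.hasFDerivAt
  set r := ε / 2 with hr
  have hr0 : 0 < r := by positivity
  have hcl : ∀ t ∈ Icc 0 T, |t - t₀| < ε → ∀ x ∈ Metric.closedBall x₀ r, 
      ‖fderiv ℝ (gradient (f t)) x - H₀‖ < m := by
    intro t ht htt x hx
    have := @hball (t, x) ⟨ht, mem_univ _⟩ (by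
      rw [Prod.dist_eq, max_lt_iff]
      exact ⟨by simpa [Real.dist_eq] using htt, by have : dist x x₀ ≤ r := hx
                                                   simp; linarith⟩)
    simpa [dist_eq_norm] using this
  have hmono : ∀ t ∈ Icc 0 T, |t - t₀| < ε → ∀ x ∈ Metric.closedBall x₀ r, ∀ y ∈ Metric.closedBall x₀ r,
      m * ‖x - y‖^2 ≤ ⟪gradient (f t) x - gradient (f t) y, x - y⟫ := by
    intro t ht htt x hx y hy
    have h1 := (convex_closedBall x₀ r).norm_image_sub_le_of_norm_hasFDerivWithin_le' (φ := H₀) (C := m)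
      (fun z _ => (hGd t ht z).hasFDerivWithinAt) (fun z hz => (hcl t ht htt z hz).le) hy hx
    have h2 := abs_real_inner_le_norm (gradient (f t) x - gradient (f t) y - H₀ (x - y)) (x - y)
    have h3 := hco (x - y)
    rw [inner_sub_left] at h2
    have h4 := (abs_le.1 h2).1
    have h5 := mul_le_mul_of_nonneg_right h1 (norm_nonneg (x-y))
    nlinarith
  have hGc : ∀ x, ContinuousOn (fun t => gradient (f t) x) (Icc 0 T) := fun x =>
    hG.continuousOn.comp (f := fun t => (t, x)) (by fun_prop) (fun t ht => ⟨ht, mem_univ _⟩)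
  obtain ⟨δ', hδ', hsm⟩ := Metric.continuousWithinAt_iff.1 (hGc x₀ t₀ ht₀) (m * r) (by positivity)
  set δ := min δ' ε with hδ
  have key : ∀ t, t ∈ Ioo (t₀ - δ) (t₀ + δ) ∩ Icc 0 T → t ∈ Icc 0 T ∧ |t - t₀| < ε ∧ |t - t₀| < δ' := by
    rintro t ⟨⟨h1, h2⟩, h3⟩
    have : |t - t₀| < δ := abs_lt.2 ⟨by linarith, by linarith⟩
    exact ⟨h3, this.trans_le (min_le_right _ _), this.trans_le (min_le_left _ _)⟩
  have hex : ∀ t, ∃ z, t ∈ Ioo (t₀ - δ) (t₀ + δ) ∩ Icc 0 T → z ∈ Metric.ball x₀ r ∧ gradient (f t) z = 0 := by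
    intro t
    by_cases h : t ∈ Ioo (t₀ - δ) (t₀ + δ) ∩ Icc 0 T
    swap
    · exact ⟨0, fun h' => absurd h' h⟩
    obtain ⟨ht, htε, htδ⟩ := key t h
    obtain ⟨z, hz, hmin⟩ := (isCompact_closedBall x₀ r).exists_isMinOn (f := f t) ⟨x₀, by simp [hr0.le]⟩
      (fun x _ => (hfd t ht x).continuousAt.continuousWithinAt)
    refine ⟨z, fun _ => ?_⟩
    have h1 : 0 ≤ ⟪gradient (f t) z, x₀ - z⟫ := by
      have := (hmin.localize).hasFDerivWithinAt_nonneg (hfd t ht z).hasFDerivAt.hasFDerivWithinAt (y := x₀ - z)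
        (mem_posTangentConeAt_of_segment_subset ((convex_closedBall x₀ r).segment_subset hz (by simp [hr0.le])))
      simpa using this
    have h2 := hmono t ht htε z hz x₀ (by simp [hr0.le])
    have h3 : ‖gradient (f t) x₀‖ < m * r := by
      have := hsm ht (by simpa [Real.dist_eq] using htδ)
      simpa [hcrit] using this
    have h4 : ‖z - x₀‖ < r := by
      by_contra hcon
      push Not at hcon
      have h5 := abs_real_inner_le_norm (gradient (f t) x₀) (z - x₀)
      rw [inner_sub_left] at h2
      have h6 : ⟪gradient (f t) z, x₀ - z⟫ = - ⟪gradient (f t) z, z - x₀⟫ := by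
        rw [← inner_neg_right, neg_sub]
      have h7 := (abs_le.1 h5).1
      have h8 : ‖gradient (f t) x₀‖ * ‖z - x₀‖ < m * r * ‖z - x₀‖ := by
        apply mul_lt_mul_of_pos_right h3; linarith
      have h9 : m * r * ‖z - x₀‖ ≤ m * ‖z - x₀‖^2 := by
        rw [mul_assoc, pow_two]
        gcongr
      linarith
    have hzb : z ∈ Metric.ball x₀ r := by simpa [dist_eq_norm] using h4
    refine ⟨hzb, ?_⟩
    have hloc : IsLocalMin (f t) z := hmin.isLocalMin (mem_of_superset (Metric.isOpen_ball.mem_nhds hzb) Metric.ball_subset_closedBall)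
    simp [gradient, hloc.fderiv_eq_zero]
  choose v hv using hex
  have hvc : ∀ t ∈ Ioo (t₀ - δ) (t₀ + δ) ∩ Icc 0 T, v t ∈ Metric.closedBall x₀ r := fun t ht =>
    Metric.ball_subset_closedBall (hv t ht).1
  refine ⟨δ, lt_min hδ' hε, r, hr0, v, ?_, fun t ht => ⟨(hv t ht).1, (hv t ht).2, ?_, ?_⟩⟩
  · intro s hs
    have hs' := key s hs
    rw [ContinuousWithinAt, tendsto_iff_norm_sub_tendsto_zero]
    have hlim : Tendsto (fun t => ‖gradient (f t) (v s)‖ / m) (𝓝[Ioo (t₀ - δ) (t₀ + δ) ∩ Icc 0 T] s) (𝓝 0) := by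
      have h1 := (((hGc (v s)) s hs.2).mono (inter_subset_right (s := Ioo (t₀ - δ) (t₀ + δ)))).norm.div_const m
      rw [ContinuousWithinAt, (hv s hs).2] at h1
      simpa using h1
    refine tendsto_of_tendsto_of_tendsto_of_le_of_le' tendsto_const_nhds hlim 
      (Eventually.of_forall fun _ => norm_nonneg _) ?_
    filter_upwards [self_mem_nhdsWithin] with t ht
    obtain ⟨ht1, ht2, ht3⟩ := key t ht
    have h2 := hmono t ht1 ht2 (v t) (hvc t ht) (v s) (hvc s hs)
    rw [(hv t ht).2, zero_sub, inner_neg_left] at h2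
    have h5 := (abs_le.1 (abs_real_inner_le_norm (gradient (f t) (v s)) (v t - v s))).1
    rw [le_div_iff₀ hm]
    by_contra hcon
    push Not at hcon
    have hpos : 0 < ‖v t - v s‖ := by
      by_contra h0
      have : ‖v t - v s‖ = 0 := le_antisymm (not_lt.1 h0) (norm_nonneg _)
      rw [this, zero_mul] at hcon
      exact absurd (norm_nonneg (gradient (f t) (v s))) (not_le.2 hcon)
    nlinarith
  · intro y hy
    obtain ⟨ht1, ht2, ht3⟩ := key t ht
    have h1 := hcl t ht1 ht2 (v t) (hvc t ht)
    have h2 := hco y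
    have h3 := (abs_le.1 (abs_real_inner_le_norm ((fderiv ℝ (gradient (f t)) (v t) - H₀) y) y)).1
    have h4 := (fderiv ℝ (gradient (f t)) (v t) - H₀).le_opNorm y
    have hpos : 0 < ‖y‖ := norm_pos_iff.2 hy
    rw [sub_apply, inner_sub_left] at h3
    rw [sub_apply] at h4
    have h5 := mul_le_mul_of_nonneg_right h4 hpos.le
    have h6 : ‖fderiv ℝ (gradient (f t)) (v t) - H₀‖ * ‖y‖ * ‖y‖ < m * ‖y‖ * ‖y‖ := by gcongr
    have h7 : 0 < m * ‖y‖^2 := by positivity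
    nlinarith
  · intro x hx hx0
    obtain ⟨ht1, ht2, ht3⟩ := key t ht
    have h2 := hmono t ht1 ht2 x (Metric.ball_subset_closedBall hx) (v t) (hvc t ht)
    rw [hx0, (hv t ht).2, sub_zero, inner_zero_left] at h2
    have : ‖x - v t‖^2 ≤ 0 := by nlinarith
    have : ‖x - v t‖ = 0 := by nlinarith [norm_nonneg (x - v t)]
    exact sub_eq_zero.1 (norm_eq_zero.1 this)

lemma equiv_of_pos (A : 𝔼 →L[ℝ] 𝔼) (hA : ∀ y, y ≠ 0 → 0 < ⟪A y, y⟫) :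
    ∃ e : 𝔼 ≃L[ℝ] 𝔼, (e : 𝔼 →L[ℝ] 𝔼) = A := by
  have hinj : Function.Injective (A : 𝔼 →ₗ[ℝ] 𝔼) := by
    rw [← LinearMap.ker_eq_bot, LinearMap.ker_eq_bot']
    intro y hy
    by_contra h
    have := hA y h
    have hy' : A y = 0 := hy
    simp [hy'] at this
  exact ⟨(LinearEquiv.ofInjectiveEndo _ hinj).toContinuousLinearEquiv, by ext1 x; rfl⟩

lemma branch_contDiffOn {T : ℝ} (hT : 0 < T) (f : ℝ → 𝔼 → ℝ)
    (hf : ContDiffOn ℝ 3 (Function.uncurry f) (Icc 0 T ×ˢ univ)) {a b : ℝ} (ha : 0 ≤ a) (hb : b ≤ T)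
    (u : ℝ → 𝔼) (hu : ContinuousOn u (Ico a b))
    (hcp : ∀ t ∈ Ico a b, gradient (f t) (u t) = 0 ∧
        ∀ y : 𝔼, y ≠ 0 → 0 < ⟪(fderiv ℝ (gradient (f t)) (u t)) y, y⟫) :
    ContDiffOn ℝ 2 u (Ico a b) := by
  have hG := grad_contDiffOn hT f hf
  have hH := partial_contDiffOn (k := 1) hT (fun t x => gradient (f t) x) (by exact_mod_cast hG)
  have hS : UniqueDiffOn ℝ (Icc 0 T ×ˢ (univ : Set 𝔼)) := (uniqueDiffOn_Icc hT).prod uniqueDiffOn_univ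
  have hD := hG.fderivWithin (m := 1) hS (by norm_num)
  set 𝒢 := (Function.uncurry fun t x => gradient (f t) x) with h𝒢
  set S := (Icc 0 T ×ˢ (univ : Set 𝔼)) with hSdef
  set d : ℝ → 𝔼 := fun t => - (ContinuousLinearMap.inverse (fderiv ℝ (gradient (f t)) (u t)))
    (fderivWithin ℝ 𝒢 S (t, u t) (1, 0)) with hd
  have hsub : ∀ t ∈ Ico a b, t ∈ Icc 0 T := fun t ht => ⟨ha.trans ht.1, ht.2.le.trans hb⟩
  have hmaps : MapsTo (fun t => (t, u t)) (Ico a b) S := fun t ht => ⟨hsub t ht, mem_univ _⟩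
  have hder : ∀ t ∈ Ico a b, HasDerivWithinAt u (d t) (Ico a b) t := by
    intro t ht
    obtain ⟨e, he⟩ := equiv_of_pos _ (hcp t ht).2
    have h1 : HasFDerivWithinAt 𝒢 (fderivWithin ℝ 𝒢 S (t, u t)) S (t, u t) :=
      ((hG.differentiableOn (by norm_num)) _ (hmaps ht)).hasFDerivWithinAt
    have h2 := (partial_hasFDerivAt (k := 2) (fun t x => gradient (f t) x) (by norm_num)
      (by exact_mod_cast hG) (hsub t ht) (u t)).fderiv
    have h2' : (e : 𝔼 →L[ℝ] 𝔼) = (fderivWithin ℝ 𝒢 S (t, u t)).comp (ContinuousLinearMap.inr ℝ ℝ 𝔼) := by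
      rw [he]; exact h2
    have hdt : d t = - e.symm (fderivWithin ℝ 𝒢 S (t, u t) (1, 0)) := by
      simp only [hd, ← he, ContinuousLinearMap.inverse_equiv]; rfl
    set D := fderivWithin ℝ 𝒢 S (t, u t) with hDdef
    have h3 : HasFDerivWithinAt (fun p : ℝ × 𝔼 => (p.1, 𝒢 p)) ((ContinuousLinearMap.fst ℝ ℝ 𝔼).prod D) S (t, u t) :=
      hasFDerivWithinAt_fst.prodMk h1
    have h4 : HasFDerivWithinAt (fun s : ℝ => (s, (0 : 𝔼))) (ContinuousLinearMap.inl ℝ ℝ 𝔼) (Ico a b) t :=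
      (hasFDerivAt_prodMk_left t (0:𝔼)).hasFDerivWithinAt
    have hg : Tendsto (fun s => (s, u s)) (𝓝[Ico a b] t) (𝓝[S] (t, u t)) := by
      apply tendsto_nhdsWithin_iff.2
      refine ⟨(continuousWithinAt_id.prodMk (hu t ht)), ?_⟩
      filter_upwards [self_mem_nhdsWithin] with s hs using hmaps hs
    have h5 := HasFDerivWithinAt.of_comp_of_leftInverse (g := fun s => (s, u s)) hg h3 h4
      (f'symm := (ContinuousLinearMap.fst ℝ ℝ 𝔼).prod ((e.symm : 𝔼 →L[ℝ] 𝔼).comp 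
        (ContinuousLinearMap.snd ℝ ℝ 𝔼 - (D.comp (ContinuousLinearMap.inl ℝ ℝ 𝔼)).comp (ContinuousLinearMap.fst ℝ ℝ 𝔼))))
      (by filter_upwards [self_mem_nhdsWithin] with s hs
          simp [h𝒢, Function.uncurry, (hcp s hs).1])
      (by rintro ⟨s, y⟩
          have h6 : D (s, y) - D (s, 0) = e y := by
            rw [← map_sub]
            have := congrArg (fun L : 𝔼 →L[ℝ] 𝔼 => L y) h2'
            simpa using this.symm
          have h7 : e.symm (D (s, y)) - e.symm (D (s, 0)) = y := by
            rw [← map_sub, h6, e.symm_apply_apply]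
          simpa using h7) ht
    have h6 := (hasFDerivAt_snd.comp_hasFDerivWithinAt t h5).hasDerivWithinAt
    have h8 : (ContinuousLinearMap.snd ℝ ℝ 𝔼 ∘L ((ContinuousLinearMap.fst ℝ ℝ 𝔼).prod ((e.symm : 𝔼 →L[ℝ] 𝔼).comp 
        (ContinuousLinearMap.snd ℝ ℝ 𝔼 - (D.comp (ContinuousLinearMap.inl ℝ ℝ 𝔼)).comp (ContinuousLinearMap.fst ℝ ℝ 𝔼))) ∘L
          ContinuousLinearMap.inl ℝ ℝ 𝔼)) 1 = d t := by
      rw [hdt]; simp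
    rw [← h8]
    exact h6
  have hboot : ∀ k : ℕ, k ≤ 1 → ContDiffOn ℝ k u (Ico a b) → ContDiffOn ℝ k d (Ico a b) := by
    intro k hk huk
    have hk' : (k : WithTop ℕ∞) ≤ 1 := by exact_mod_cast hk
    have hp : ContDiffOn ℝ k (fun t => (t, u t)) (Ico a b) := contDiffOn_id.prodMk huk
    have hA : ContDiffOn ℝ k (fun t => fderiv ℝ (gradient (f t)) (u t)) (Ico a b) :=
      (hH.of_le (by exact_mod_cast hk)).comp hp hmaps
    have hB : ContDiffOn ℝ k (fun t => fderivWithin ℝ 𝒢 S (t, u t) (1, 0)) (Ico a b) :=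
      ((hD.of_le hk').comp hp hmaps).clm_apply contDiffOn_const
    have hI : ContDiffOn ℝ k (fun t => ContinuousLinearMap.inverse (fderiv ℝ (gradient (f t)) (u t))) (Ico a b) := by
      intro t ht
      obtain ⟨e, he⟩ := equiv_of_pos _ (hcp t ht).2
      have := contDiffAt_map_inverse (𝕜 := ℝ) (n := k) e
      rw [he] at this
      exact this.comp_contDiffWithinAt t (hA t ht)
    exact (hI.clm_apply hB).neg
  have hup : ∀ k : ℕ, k ≤ 1 → ContDiffOn ℝ k u (Ico a b) → ContDiffOn ℝ (k+1 : ℕ) u (Ico a b) := by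
    intro k hk huk
    push_cast
    rw [contDiffOn_succ_iff_derivWithin (uniqueDiffOn_Ico a b)]
    refine ⟨fun t ht => (hder t ht).differentiableWithinAt, by simp, ?_⟩
    refine (hboot k hk huk).congr fun t ht => ?_
    exact (hder t ht).derivWithin (uniqueDiffOn_Ico a b t ht)
  exact_mod_cast hup 1 le_rfl (hup 0 (by norm_num) (by simpa using hu))

lemma branch_unique {T : ℝ} (hT : 0 < T) (f : ℝ → 𝔼 → ℝ)
    (hf : ContDiffOn ℝ 3 (Function.uncurry f) (Icc 0 T ×ˢ univ)) {a b : ℝ} (ha : 0 ≤ a) (hb : b ≤ T)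
    (u v : ℝ → 𝔼) (hu : ContinuousOn u (Ico a b)) (hv : ContinuousOn v (Ico a b))
    (hcu : ∀ t ∈ Ico a b, gradient (f t) (u t) = 0)
    (hcv : ∀ t ∈ Ico a b, gradient (f t) (v t) = 0 ∧
        ∀ y : 𝔼, y ≠ 0 → 0 < ⟪(fderiv ℝ (gradient (f t)) (v t)) y, y⟫) (hab : u a = v a) :
    EqOn u v (Ico a b) := by
  intro t ht
  have hsub : Icc a t ⊆ Ico a b := fun s hs => ⟨hs.1, hs.2.trans_lt ht.2⟩
  have hcl : IsClosed ({s | u s = v s} ∩ Icc a t) := by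
    have := ((hu.mono hsub).sub (hv.mono hsub)).preimage_isClosed_of_isClosed isClosed_Icc (isClosed_singleton (x := (0:𝔼)))
    convert this using 1
    ext s
    simp [sub_eq_zero, and_comm]
  refine hcl.Icc_subset_of_forall_mem_nhdsWithin hab ?_ (right_mem_Icc.2 ht.1)
  rintro s ⟨hs, hs1, hs2⟩
  have hsb : s ∈ Ico a b := hsub ⟨hs1, hs2.le⟩
  obtain ⟨δ, hδ, r, hr, w, -, hw⟩ := local_branch hT f hf ⟨ha.trans hs1, hsb.2.le.trans hb⟩ (hcv s hsb).1 (hcv s hsb).2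
  have hle : 𝓝[>] s ≤ 𝓝[Ico a b] s := by
    rw [← nhdsWithin_Ioo_eq_nhdsGT hsb.2]
    exact nhdsWithin_mono _ fun q hq => ⟨hs1.trans hq.1.le, hq.2⟩
  have h1 : ∀ᶠ q in 𝓝[>] s, u q ∈ Metric.ball (v s) r :=
    ((hu s hsb).mono_left hle).eventually_mem (by rw [show u s = v s from hs]; exact Metric.ball_mem_nhds _ hr)
  have h2 : ∀ᶠ q in 𝓝[>] s, v q ∈ Metric.ball (v s) r :=
    ((hv s hsb).mono_left hle).eventually_mem (Metric.ball_mem_nhds _ hr)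
  have h3 : ∀ᶠ q in 𝓝[>] s, q ∈ Ioo s (min b (s + δ)) := Ioo_mem_nhdsGT (lt_min hsb.2 (by linarith))
  filter_upwards [h1, h2, h3] with q h1 h2 h3
  have hqb : q ∈ Ico a b := ⟨hs1.trans h3.1.le, h3.2.trans_le (min_le_left _ _)⟩
  have hqw := (hw q ⟨⟨by linarith [h3.1], h3.2.trans_le (min_le_right _ _)⟩, ha.trans hqb.1, hqb.2.le.trans hb⟩).2.2.2
  exact (hqw _ h1 (hcu q hqb)).trans (hqw _ h2 (hcv q hqb).1).symm

/-- `u` is a continuous branch of nondegenerate minima on `[a,b)` starting at `x`. -/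
def IsBranch (f : ℝ → 𝔼 → ℝ) (a : ℝ) (x : 𝔼) (b : ℝ) (u : ℝ → 𝔼) : Prop :=
  ContinuousOn u (Ico a b) ∧ u a = x ∧ ∀ t ∈ Ico a b, gradient (f t) (u t) = 0 ∧
        ∀ y : 𝔼, y ≠ 0 → 0 < ⟪(fderiv ℝ (gradient (f t)) (u t)) y, y⟫

lemma IsBranch.mono {f : ℝ → 𝔼 → ℝ} {a : ℝ} {x : 𝔼} {b b' : ℝ} {u : ℝ → 𝔼} (h : IsBranch f a x b u)
    (hb : b' ≤ b) : IsBranch f a x b' u :=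
  ⟨h.1.mono (Ico_subset_Ico_right hb), h.2.1, fun t ht => h.2.2 t (Ico_subset_Ico_right hb ht)⟩

lemma IsBranch.eqOn {T : ℝ} (hT : 0 < T) {f : ℝ → 𝔼 → ℝ}
    (hf : ContDiffOn ℝ 3 (Function.uncurry f) (Icc 0 T ×ˢ univ)) {a b : ℝ} (ha : 0 ≤ a) (hb : b ≤ T) {x : 𝔼}
    {u v : ℝ → 𝔼} (hu : IsBranch f a x b u) (hv : IsBranch f a x b v) : EqOn u v (Ico a b) :=
  branch_unique hT f hf ha hb u v hu.1 hv.1 (fun t ht => (hu.2.2 t ht).1) hv.2.2 (hu.2.1.trans hv.2.1.symm)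

lemma max_branch {T : ℝ} (hT : 0 < T) (f : ℝ → 𝔼 → ℝ)
    (hf : ContDiffOn ℝ 3 (Function.uncurry f) (Icc 0 T ×ˢ univ)) {a : ℝ} (ha : a ∈ Ico 0 T)
    {x : 𝔼} (hcrit : gradient (f a) x = 0)
    (hpd : ∀ y : 𝔼, y ≠ 0 → 0 < ⟪(fderiv ℝ (gradient (f a)) x) y, y⟫) :
    ∃ b ∈ Ioc a T, ∃ u, IsBranch f a x b u ∧ ∀ b' ∈ Ioc a T, ∀ u', IsBranch f a x b' u' → b' ≤ b := by
  set A := {b | b ∈ Ioc a T ∧ ∃ u, IsBranch f a x b u} with hA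
  have hbdd : BddAbove A := ⟨T, fun b hb => hb.1.2⟩
  have hne : ∃ b, b ∈ A := by
    obtain ⟨δ, hδ, r, hr, w, hwc, hw⟩ := local_branch hT f hf ⟨ha.1, ha.2.le⟩ hcrit hpd
    have hsub : Ico a (min T (a + δ)) ⊆ Ioo (a - δ) (a + δ) ∩ Icc 0 T := fun t ht =>
      ⟨⟨by linarith [ht.1], ht.2.trans_le (min_le_right _ _)⟩, ha.1.trans ht.1, (ht.2.trans_le (min_le_left _ _)).le⟩
    have hlt : a < min T (a + δ) := lt_min ha.2 (by linarith)
    refine ⟨min T (a + δ), ⟨hlt, min_le_left _ _⟩, w, hwc.mono hsub, ?_, fun t ht => ?_⟩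
    · exact ((hw a (hsub ⟨le_rfl, hlt⟩)).2.2.2 x (by simp [hr]) hcrit).symm
    · exact ⟨(hw t (hsub ht)).2.1, (hw t (hsub ht)).2.2.1⟩
  obtain ⟨b₀, hb₀⟩ := hne
  have hmem : sSup A ∈ Ioc a T := ⟨hb₀.1.1.trans_le (le_csSup hbdd hb₀), csSup_le ⟨b₀, hb₀⟩ fun b hb => hb.1.2⟩
  have hch : ∀ t, ∃ b, ∃ U, t < sSup A → t < b ∧ b ∈ Ioc a T ∧ b ≤ sSup A ∧ IsBranch f a x b U := by
    intro t
    by_cases h : t < sSup A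
    · obtain ⟨b, hb, htb⟩ := exists_lt_of_lt_csSup ⟨b₀, hb₀⟩ h
      obtain ⟨U, hU⟩ := hb.2
      exact ⟨b, U, fun _ => ⟨htb, hb.1, le_csSup hbdd hb, hU⟩⟩
    · exact ⟨0, 0, fun h' => absurd h' h⟩
  choose B U hBU using hch
  set u : ℝ → 𝔼 := fun t => U t t with hu
  have heq : ∀ s, s < sSup A → EqOn u (U s) (Ico a (B s)) := by
    intro s hs t ht
    obtain ⟨h1, h2, h3, h4⟩ := hBU s hs
    obtain ⟨k1, k2, k3, k4⟩ := hBU t (ht.2.trans_le h3)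
    exact IsBranch.eqOn (b := min (B s) (B t)) hT hf ha.1 ((min_le_left _ _).trans h2.2) (k4.mono (min_le_right _ _))
      (h4.mono (min_le_left _ _)) ⟨ht.1, lt_min ht.2 k1⟩
  refine ⟨sSup A, hmem, u, ⟨?_, ?_, ?_⟩, fun b' hb' u' hu' => le_csSup hbdd ⟨hb', u', hu'⟩⟩
  · intro t ht
    obtain ⟨h1, h2, h3, h4⟩ := hBU t ht.2
    have := (h4.1.congr (heq t ht.2)) t ⟨ht.1, h1⟩
    refine this.mono_of_mem_nhdsWithin ?_
    filter_upwards [self_mem_nhdsWithin, mem_nhdsWithin_of_mem_nhds (Iio_mem_nhds h1)] with q h q2 using ⟨h.1, q2⟩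
  · exact (hBU a hmem.1).2.2.2.2.1
  · intro t ht
    obtain ⟨h1, h2, h3, h4⟩ := hBU t ht.2
    exact h4.2.2 t ⟨ht.1, h1⟩

lemma cluster_props {T : ℝ} (hT : 0 < T) (f : ℝ → 𝔼 → ℝ)
    (hf : ContDiffOn ℝ 3 (Function.uncurry f) (Icc 0 T ×ˢ univ)) {a b : ℝ} (ha : 0 ≤ a) (hab : a < b) (hb : b ≤ T)
    {x x' : 𝔼} {u : ℝ → 𝔼} (hu : IsBranch f a x b u) (hx : MapClusterPt x' (𝓝[<] b) u) :
    gradient (f b) x' = 0 ∧ ∀ y, 0 ≤ ⟪(fderiv ℝ (gradient (f b)) x') y, y⟫ := by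
  have hG := grad_contDiffOn hT f hf
  have hH := partial_contDiffOn (k := 1) hT (fun t x => gradient (f t) x) (by exact_mod_cast hG)
  obtain ⟨W, hW, hlim⟩ := mapClusterPt_iff_ultrafilter.1 hx
  have hI : ∀ᶠ t in (W : Filter ℝ), t ∈ Ico a b :=
    hW (mem_of_superset (Ioo_mem_nhdsLT hab) Ioo_subset_Ico_self)
  have hpair : Tendsto (fun t => (t, u t)) W (𝓝[Icc 0 T ×ˢ univ] (b, x')) := by
    apply tendsto_nhdsWithin_iff.2
    constructor
    · exact Tendsto.prodMk_nhds (tendsto_id'.2 (hW.trans nhdsWithin_le_nhds)) hlim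
    · filter_upwards [hI] with t ht using ⟨⟨ha.trans ht.1, ht.2.le.trans hb⟩, mem_univ _⟩
  have hmem : (b, x') ∈ Icc 0 T ×ˢ (univ : Set 𝔼) := ⟨⟨ha.trans hab.le, hb⟩, mem_univ _⟩
  constructor
  · have h1 := (hG.continuousOn _ hmem).tendsto.comp hpair
    refine tendsto_nhds_unique h1 (tendsto_const_nhds.congr' ?_)
    filter_upwards [hI] with t ht using (hu.2.2 t ht).1.symm
  · intro y
    have h1 := (hH.continuousOn _ hmem).tendsto.comp hpair
    have h2 : Tendsto (fun t => ⟪fderiv ℝ (gradient (f t)) (u t) y, y⟫) W (𝓝 ⟪(fderiv ℝ (gradient (f b)) x') y, y⟫) :=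
      (((ContinuousLinearMap.apply ℝ 𝔼 y).continuous.tendsto _).comp h1).inner tendsto_const_nhds
    refine ge_of_tendsto h2 ?_
    filter_upwards [hI] with t ht
    by_cases hy : y = 0
    · simp [hy]
    · exact ((hu.2.2 t ht).2 y hy).le

lemma cluster_pd {T : ℝ} (hT : 0 < T) (f : ℝ → 𝔼 → ℝ)
    (hf : ContDiffOn ℝ 3 (Function.uncurry f) (Icc 0 T ×ˢ univ)) {a b : ℝ} (ha : 0 ≤ a) (hab : a < b) (hb : b ≤ T)
    {x x' : 𝔼} {u : ℝ → 𝔼} (hu : IsBranch f a x b u) (hx : MapClusterPt x' (𝓝[<] b) u)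
    (hpd : ∀ y : 𝔼, y ≠ 0 → 0 < ⟪(fderiv ℝ (gradient (f b)) x') y, y⟫) :
    Tendsto u (𝓝[<] b) (𝓝 x') ∧ (b < T → ∃ b' ∈ Ioc a T, b < b' ∧ ∃ u', IsBranch f a x b' u') := by
  have hcrit := (cluster_props hT f hf ha hab hb hu hx).1
  obtain ⟨δ, hδ, r, hr, w, hwc, hw⟩ := local_branch hT f hf ⟨ha.trans hab.le, hb⟩ hcrit hpd
  have hfr := hx.frequently (Metric.ball_mem_nhds x' hr)
  have hev : ∀ᶠ t in 𝓝[<] b, t ∈ Ioo (max a (b - δ)) b := Ioo_mem_nhdsLT (max_lt hab (by linarith))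
  obtain ⟨c, hc, hc'⟩ := (hfr.and_eventually hev).exists
  have hca : a < c := (le_max_left _ _).trans_lt hc'.1
  have hcδ : b - δ < c := (le_max_right _ _).trans_lt hc'.1
  have hsub : Ico c (b + δ) ∩ Iic T ⊆ Ioo (b - δ) (b + δ) ∩ Icc 0 T := fun t ht =>
    ⟨⟨hcδ.trans_le ht.1.1, ht.1.2⟩, (ha.trans hca.le).trans ht.1.1, ht.2⟩
  have hsub' : Ico c b ⊆ Ioo (b - δ) (b + δ) ∩ Icc 0 T := fun t ht => 
    hsub ⟨⟨ht.1, ht.2.trans (by linarith)⟩, ht.2.le.trans hb⟩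
  have hsubu : Ico c b ⊆ Ico a b := Ico_subset_Ico_left hca.le
  have heq : EqOn u w (Ico c b) := by
    refine branch_unique hT f hf (ha.trans hca.le) hb u w (hu.1.mono hsubu) (hwc.mono hsub')
      (fun t ht => (hu.2.2 t (hsubu ht)).1) (fun t ht => ⟨(hw t (hsub' ht)).2.1, (hw t (hsub' ht)).2.2.1⟩) ?_
    exact (hw c (hsub' ⟨le_rfl, hc'.2⟩)).2.2.2 _ hc (hu.2.2 c ⟨hca.le, hc'.2⟩).1
  have hbm : b ∈ Ioo (b - δ) (b + δ) ∩ Icc 0 T := hsub ⟨⟨hc'.2.le, by linarith⟩, hb⟩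
  have hwb : w b = x' := ((hw b hbm).2.2.2 x' (by simp [hr]) hcrit).symm
  constructor
  · have h1 : Tendsto w (𝓝[Ico c b] b) (𝓝 x') := by
      have := (hwc b hbm).mono hsub'
      rwa [ContinuousWithinAt, hwb] at this
    rw [nhdsWithin_Ico_eq_nhdsLT hc'.2] at h1
    refine h1.congr' ?_
    filter_upwards [Ico_mem_nhdsLT hc'.2] with t ht using (heq ht).symm
  · intro hbT
    set u' : ℝ → 𝔼 := fun t => if t < b then u t else w t with hu'
    have e1 : EqOn u' u (Ico a b) := fun t ht => by simp [hu', ht.2]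
    have e2 : EqOn u' w (Ico c (min T (b + δ))) := fun t ht => by
      by_cases h : t < b
      · simp only [hu', h, if_true]; exact heq ⟨ht.1, h⟩
      · simp [hu', h]
    have hs2 : Ico c (min T (b + δ)) ⊆ Ioo (b - δ) (b + δ) ∩ Icc 0 T := fun t ht =>
      hsub ⟨⟨ht.1, ht.2.trans_le (min_le_right _ _)⟩, (ht.2.trans_le (min_le_left _ _)).le⟩
    have hlt : b < min T (b + δ) := lt_min hbT (by linarith)
    refine ⟨min T (b + δ), ⟨hab.trans hlt, min_le_left _ _⟩, hlt, u', ?_, ?_, ?_⟩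
    · intro t ht
      by_cases h : t < b
      · refine ((hu.1.congr e1) t ⟨ht.1, h⟩).mono_of_mem_nhdsWithin ?_
        filter_upwards [self_mem_nhdsWithin, mem_nhdsWithin_of_mem_nhds (Iio_mem_nhds h)] with q h q2 using ⟨h.1, q2⟩
      · have hct : c < t := hc'.2.trans_le (not_lt.1 h)
        refine (((hwc.mono hs2).congr e2) t ⟨hct.le, ht.2⟩).mono_of_mem_nhdsWithin ?_
        filter_upwards [self_mem_nhdsWithin, mem_nhdsWithin_of_mem_nhds (Ioi_mem_nhds hct)] with q h q2 using ⟨le_of_lt q2, h.2⟩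
    · rw [e1 ⟨le_rfl, hab⟩, hu.2.1]
    · intro t ht
      by_cases h : t < b
      · rw [e1 ⟨ht.1, h⟩]; exact hu.2.2 t ⟨ht.1, h⟩
      · have hm : t ∈ Ico c (min T (b + δ)) := ⟨hc'.2.le.trans (not_lt.1 h), ht.2⟩
        rw [e2 hm]
        exact ⟨(hw t (hs2 hm)).2.1, (hw t (hs2 hm)).2.2.1⟩

lemma det_zero_of_not_pd (A : 𝔼 →L[ℝ] 𝔼) (hsymm : ∀ y z, ⟪A y, z⟫ = ⟪A z, y⟫) (hpsd : ∀ y, 0 ≤ ⟪A y, y⟫)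
    (hn : ¬ ∀ y, y ≠ 0 → 0 < ⟪A y, y⟫) : LinearMap.det (A : 𝔼 →ₗ[ℝ] 𝔼) = 0 := by
  push Not at hn
  obtain ⟨y, hy, hy0⟩ := hn
  have h0 : ⟪A y, y⟫ = 0 := le_antisymm hy0 (hpsd y)
  set z := A y with hz
  set c := ⟪A z, z⟫ with hc
  have hc0 : 0 ≤ c := hpsd z
  have h1 : ∀ s : ℝ, 0 ≤ 2 * s * ‖z‖^2 + s^2 * c := by
    intro s
    have h2 := hpsd (y + s • z)
    have h3 : ⟪A z, y⟫ = ‖z‖^2 := by rw [hsymm z y, ← hz, real_inner_self_eq_norm_sq]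
    simp only [map_add, map_smul, inner_add_left, inner_add_right, real_inner_smul_left, real_inner_smul_right,
      ← hz, h0, h3, real_inner_self_eq_norm_sq, ← hc] at h2
    linarith
  have hz0 : z = 0 := by
    by_contra hne
    have hp : 0 < ‖z‖^2 := by have := norm_pos_iff.2 hne; positivity
    have h2 := h1 (-(‖z‖^2 / (c+1)))
    have h3 : 2 * -(‖z‖^2 / (c+1)) * ‖z‖^2 + (-(‖z‖^2 / (c+1)))^2 * c = -((‖z‖^2)^2 * (c + 2) / (c+1)^2) := by
      field_simp
      ring
    rw [h3] at h2
    have : 0 < (‖z‖^2)^2 * (c + 2) / (c+1)^2 := by positivity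
    linarith
  by_contra hdet
  have hker := LinearMap.ker_eq_bot'.1 (LinearMap.ker_eq_bot.2 (LinearEquiv.ofIsUnitDet (f := (A : 𝔼 →ₗ[ℝ] 𝔼)) (v := Module.finBasis ℝ 𝔼)
    (v' := Module.finBasis ℝ 𝔼) (by rw [LinearMap.det_toMatrix]; exact isUnit_iff_ne_zero.2 hdet)).injective) y hz0
  exact hy hker

end aux

/-- under Assumptions 1 and 3, from a point `(t̄, x̄)` with `∇ₓf(t̄,x̄) = 0`
and positive definite Hessian, a `C²` branch of nondegenerate critical points can be
continued on a maximal interval `[t̄, t̂)`; the left limit `x̂` at `t̂` exists and either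
`t̂ = T` or `(t̂, x̂) ∈ Z_f`. -/
theorem branch_continuation
    {n : ℕ} (hn : 1 ≤ n) {T : ℝ} (hT : 0 < T)
    (f : ℝ → EuclideanSpace ℝ (Fin n) → ℝ)
    (hf : ContDiffOn ℝ 3 (Function.uncurry f)
      (Set.Icc 0 T ×ˢ (Set.univ : Set (EuclideanSpace ℝ (Fin n)))))
    {a₀ c₀ : ℝ} (ha₀ : 0 ≤ a₀) (hc₀ : 0 < c₀)
    (hA1 : ∀ t ∈ Set.Icc (0:ℝ) T, ∀ x : EuclideanSpace ℝ (Fin n),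
      ⟪gradient (f t) x, x⟫ ≥ c₀ * ‖x‖ ^ 2 - a₀)
    (hA3fin : (degenerateCriticalSet T f).Finite)
    (hA3inj : ∀ p ∈ degenerateCriticalSet T f, ∀ q ∈ degenerateCriticalSet T f,
      p.1 = q.1 → p = q)
    (hA3end : ∀ p ∈ degenerateCriticalSet T f, p.1 ≠ 0 ∧ p.1 ≠ T)
    (tbar : ℝ) (htbar : tbar ∈ Set.Ico (0:ℝ) T)
    (xbar : EuclideanSpace ℝ (Fin n))
    (hcrit : gradient (f tbar) xbar = 0)
    (hpd : ∀ y : EuclideanSpace ℝ (Fin n), y ≠ 0 →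
      0 < ⟪(fderiv ℝ (gradient (f tbar)) xbar) y, y⟫) :
    ∃ that ∈ Set.Ioc tbar T, ∃ u : ℝ → EuclideanSpace ℝ (Fin n),
      ContDiffOn ℝ 2 u (Set.Ico tbar that) ∧
      u tbar = xbar ∧
      (∀ t ∈ Set.Ico tbar that, gradient (f t) (u t) = 0 ∧
        ∀ y : EuclideanSpace ℝ (Fin n), y ≠ 0 →
          0 < ⟪(fderiv ℝ (gradient (f t)) (u t)) y, y⟫) ∧
      ∃ xhat : EuclideanSpace ℝ (Fin n),
        Tendsto u (nhdsWithin that (Set.Iio that)) (nhds xhat) ∧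
        (that = T ∨ (that, xhat) ∈ degenerateCriticalSet T f) := by
  obtain ⟨b, hb, u, hu, hmax⟩ := max_branch hT f hf htbar hcrit hpd
  refine ⟨b, hb, u, branch_contDiffOn hT f hf htbar.1 hb.2 u hu.1 hu.2.2, hu.2.1, hu.2.2, ?_⟩
  set R := Real.sqrt (a₀ / c₀) with hR
  have hbd : ∀ᶠ t in 𝓝[<] b, u t ∈ Metric.closedBall 0 R := by
    filter_upwards [Ico_mem_nhdsLT hb.1] with t ht
    have h1 := hA1 t ⟨htbar.1.trans ht.1, ht.2.le.trans hb.2⟩ (u t)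
    rw [(hu.2.2 t ht).1, inner_zero_left] at h1
    rw [mem_closedBall_zero_iff]
    apply Real.le_sqrt_of_sq_le
    rw [le_div_iff₀ hc₀]
    linarith
  have hcpt := isCompact_closedBall (0 : EuclideanSpace ℝ (Fin n)) R
  by_cases hex : ∃ x', MapClusterPt x' (𝓝[<] b) u ∧
      ∀ y : EuclideanSpace ℝ (Fin n), y ≠ 0 → 0 < ⟪(fderiv ℝ (gradient (f b)) x') y, y⟫
  · obtain ⟨x', hx', hp⟩ := hex
    obtain ⟨h1, h2⟩ := cluster_pd hT f hf htbar.1 hb.1 hb.2 hu hx' hp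
    refine ⟨x', h1, Or.inl ?_⟩
    by_contra hne
    obtain ⟨b', hb', hlt, u', hu'⟩ := h2 (lt_of_le_of_ne hb.2 hne)
    exact absurd (hmax b' hb' u' hu') (not_le.2 hlt)
  · have hdeg : ∀ x', MapClusterPt x' (𝓝[<] b) u → (b, x') ∈ degenerateCriticalSet T f := by
      intro x' hx'
      have hbI : b ∈ Icc 0 T := ⟨htbar.1.trans hb.1.le, hb.2⟩
      obtain ⟨h1, h2⟩ := cluster_props hT f hf htbar.1 hb.1 hb.2 hu hx'
      refine ⟨hbI, h1, ?_⟩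
      exact det_zero_of_not_pd _ (hess_symm hT f hf hbI x') h2 fun h => hex ⟨x', hx', h⟩
    obtain ⟨xhat, -, hx⟩ := hcpt.exists_mapClusterPt (f := 𝓝[<] b) (u := u) (le_principal_iff.2 (mem_map.2 hbd))
    refine ⟨xhat, ?_, Or.inr (hdeg _ hx)⟩
    refine hcpt.le_nhds_of_unique_clusterPt hbd fun y _ hy => ?_
    exact congrArg Prod.snd (hA3inj _ (hdeg y hy) _ (hdeg _ hx) rfl)
end

section
/- Under Assumption 1, let 0 ≤ t̄ < t̂ ≤ T and let u : [t̄,t̂) → ℝⁿ be continuous with ∇ₓf(t,u(t)) = 0 for every t ∈ [t̄,t̂). Define K := {x ∈ ℝⁿ : there exists a sequence s_k ↗ t̂ with u(s_k) → x}. Then K is nonempty, compact and connected, and every x ∈ K is a critical point of f(t̂,·). If, in addition, t̂ < T, det ∇²ₓf(t,u(t)) ≠ 0 for every t ∈ [t̄,t̂), and there is no η > 0 and no continuous extension ũ : [t̄, t̂+η) → ℝⁿ of u satisfying ∇ₓf(t,ũ(t)) = 0 and det ∇²ₓf(t,ũ(t)) ≠ 0 on [t̄, t̂+η), then det ∇²ₓf(t̂,x)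 = 0 for every x ∈ K. -/
open Set Filter Topology
open scoped RealInnerProductSpace

theorem aux_K_iff {E : Type*} [NormedAddCommGroup E] (a b : ℝ) (hab : a < b) (u : ℝ → E) (x : E) :
    (∃ s : ℕ → ℝ, (∀ k, s k ∈ Set.Ico a b) ∧ Monotone s ∧
        Tendsto s atTop (nhds b) ∧ Tendsto (fun k => u (s k)) atTop (nhds x)) ↔
    MapClusterPt x (𝓝[<] b) u := by
  constructor
  · rintro ⟨s, hs, -, hsb, hux⟩
    refine MapClusterPt.of_comp (φ := s) (p := atTop) ?_ hux.mapClusterPt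
    exact tendsto_nhdsWithin_iff.2 ⟨hsb, Eventually.of_forall fun k => (hs k).2⟩
  · intro h
    have hne : NeBot (𝓝[<] b ⊓ comap u (𝓝 x)) := by
      rw [neBot_inf_comap_iff_map, inf_comm]; exact h
    obtain ⟨s, hs⟩ := exists_seq_tendsto (𝓝[<] b ⊓ comap u (𝓝 x))
    rw [tendsto_inf, tendsto_comap_iff] at hs
    have hI : ∀ᶠ k in atTop, s k ∈ Ico a b := hs.1.eventually (Ico_mem_nhdsLT hab)
    obtain ⟨N, hN⟩ := eventually_atTop.1 hI
    have hsb : Tendsto s atTop (𝓝 b) := hs.1.mono_right nhdsWithin_le_nhds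
    have hshift : Tendsto (fun k : ℕ => k + N) atTop atTop := tendsto_add_atTop_nat N
    obtain ⟨g, hg⟩ := exists_increasing_or_nonincreasing_subseq (· < ·) (fun k => s (k + N))
    have hgt : Tendsto (fun k => g k + N) atTop atTop := hshift.comp g.strictMono.tendsto_atTop
    rcases hg with hg | hg
    · refine ⟨fun k => s (g k + N), fun k => hN _ (by omega), ?_, hsb.comp hgt, hs.2.comp hgt⟩
      exact StrictMono.monotone (fun m n hmn => hg m n hmn)
    · exfalso
      have h1 : b ≤ s (g 0 + N) := by
        refine le_of_tendsto (hsb.comp hgt) ?_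
        filter_upwards [eventually_gt_atTop 0] with k hk
        exact not_lt.1 (hg 0 k hk)
      exact absurd (hN (g 0 + N) (by omega)).2 (not_lt.2 h1)

theorem aux_ev {E : Type*} [NormedAddCommGroup E] (a b : ℝ) (hab : a < b) (u : ℝ → E)
    (B : Set E) (hB : IsCompact B) (huB : ∀ t ∈ Ico a b, u t ∈ B) (U : Set E) (hU : IsOpen U)
    (hKU : {x | MapClusterPt x (𝓝[<] b) u} ⊆ U) : ∀ᶠ t in 𝓝[<] b, u t ∈ U := by
  by_contra hcon
  have hf : ∃ᶠ t in 𝓝[<] b, u t ∈ B \ U := by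
    have := (not_eventually.1 hcon).and_eventually (Ico_mem_nhdsLT hab)
    exact this.mono fun t ht => ⟨huB t ht.2, ht.1⟩
  obtain ⟨x, hx, hxc⟩ := (hB.diff hU).exists_mapClusterPt_of_frequently hf
  exact hx.2 (hKU hxc)

theorem aux_K {E : Type*} [NormedAddCommGroup E] (a b : ℝ) (hab : a < b) (u : ℝ → E)
    (hu : ContinuousOn u (Ico a b))
    (B : Set E) (hB : IsCompact B) (huB : ∀ t ∈ Ico a b, u t ∈ B) :
    {x | MapClusterPt x (𝓝[<] b) u}.Nonempty ∧ IsCompact {x | MapClusterPt x (𝓝[<] b) u} ∧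
    IsPreconnected {x | MapClusterPt x (𝓝[<] b) u} := by
  have hev : ∀ᶠ t in 𝓝[<] b, u t ∈ B :=
    (Ico_mem_nhdsLT hab : Ico a b ∈ 𝓝[<] b) |> fun h => by filter_upwards [h] with t ht using huB t ht
  have hcl : IsClosed {x | MapClusterPt x (𝓝[<] b) u} := isClosed_setOfPred_clusterPt
  refine ⟨?_, ?_, ?_⟩
  · obtain ⟨x, -, hx⟩ := hB.exists_mapClusterPt_of_frequently hev.frequently
    exact ⟨x, hx⟩
  · exact hB.of_isClosed_subset hcl fun x hx => hB.isClosed.mem_of_mapClusterPt hx hev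
  · rw [isPreconnected_iff_subset_of_fully_disjoint_closed hcl]
    intro P Q hP hQ hPQ hd
    obtain ⟨U, V, hU, hV, hPU, hQV, hUV⟩ := normal_separation hP hQ hd
    have h1 := aux_ev a b hab u B hB huB (U ∪ V) (hU.union hV)
      (hPQ.trans (union_subset_union hPU hQV))
    obtain ⟨c, hc, hcs⟩ := (mem_nhdsLT_iff_exists_Ioo_subset' hab).1
      (h1.and (Ico_mem_nhdsLT hab))
    have hsub : u '' Ioo c b ⊆ U ∪ V := by
      rintro _ ⟨t, ht, rfl⟩; exact (hcs ht).1
    have hpre : IsPreconnected (u '' Ioo c b) :=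
      isPreconnected_Ioo.image u (hu.mono fun t ht => (hcs ht).2)
    have key : ∀ W : Set E, u '' Ioo c b ⊆ W → ∀ x, MapClusterPt x (𝓝[<] b) u → x ∈ closure W := by
      intro W hW x hx
      refine isClosed_closure.mem_of_mapClusterPt hx ?_
      filter_upwards [Ioo_mem_nhdsLT hc] with t ht
      exact subset_closure (hW ⟨t, ht, rfl⟩)
    rcases hpre.subset_or_subset hU hV hUV hsub with h | h
    · left
      intro x hx
      rcases hPQ hx with h' | h'
      · exact h'
      · exact absurd (hQV h') (disjoint_left.1 (hUV.closure_left hV) (key U h x hx))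
    · right
      intro x hx
      rcases hPQ hx with h' | h'
      · exact absurd (key V h x hx) (disjoint_left.1 (hUV.closure_right hU) (hPU h'))
      · exact h'

theorem aux_partial {E F : Type*} [NormedAddCommGroup E] [NormedSpace ℝ E]
    [NormedAddCommGroup F] [NormedSpace ℝ F] {T : ℝ} (hT : 0 < T) (H : ℝ × E → F) (m : ℕ)
    (hH : ContDiffOn ℝ (m + 1) H (Icc 0 T ×ˢ univ)) :
    ContDiffOn ℝ m (fun p => (fderivWithin ℝ H (Icc 0 T ×ˢ univ) p) ∘L
      (ContinuousLinearMap.inr ℝ ℝ E)) (Icc 0 T ×ˢ univ) ∧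
    ∀ t ∈ Icc 0 T, ∀ x, HasFDerivAt (fun y => H (t, y))
      ((fderivWithin ℝ H (Icc 0 T ×ˢ univ) (t, x)) ∘L (ContinuousLinearMap.inr ℝ ℝ E)) x := by
  have hS : UniqueDiffOn ℝ (Icc (0:ℝ) T ×ˢ (univ : Set E)) :=
    (uniqueDiffOn_Icc hT).prod uniqueDiffOn_univ
  constructor
  · exact (hH.fderivWithin hS le_rfl).clm_comp contDiffOn_const
  · intro t ht x
    have h1 : HasFDerivWithinAt H (fderivWithin ℝ H (Icc 0 T ×ˢ univ) (t, x)) (Icc 0 T ×ˢ univ)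
        (t, x) := ((hH.differentiableOn (by simp)) (t, x) ⟨ht, mem_univ _⟩).hasFDerivWithinAt
    have h2 : HasFDerivWithinAt (fun y : E => (t, y)) (ContinuousLinearMap.inr ℝ ℝ E) univ x :=
      (hasFDerivAt_prodMk_right t x).hasFDerivWithinAt
    have := h1.comp x h2 (fun y _ => ⟨ht, mem_univ _⟩)
    exact hasFDerivWithinAt_univ.1 this

/-- the set `K` of limits of `u(s_k)` along increasing sequences `s_k ↗ t̂`
is nonempty, compact and connected, and consists of critical points of `f(t̂,·)`;
if moreover `t̂ < T`, the branch is nondegenerate and cannot be continued beyond `t̂`,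
then the Hessian is degenerate at every point of `K`. -/
theorem limit_set_of_branch
    {n : ℕ} (hn : 1 ≤ n) {T : ℝ} (hT : 0 < T)
    (f : ℝ → EuclideanSpace ℝ (Fin n) → ℝ)
    (hf : ContDiffOn ℝ 3 (Function.uncurry f)
      (Set.Icc 0 T ×ˢ (Set.univ : Set (EuclideanSpace ℝ (Fin n)))))
    {a₀ c₀ : ℝ} (ha₀ : 0 ≤ a₀) (hc₀ : 0 < c₀)
    (hA1 : ∀ t ∈ Set.Icc (0:ℝ) T, ∀ x : EuclideanSpace ℝ (Fin n),
      ⟪gradient (f t) x, x⟫ ≥ c₀ * ‖x‖ ^ 2 - a₀)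
    (tbar that : ℝ) (h0 : 0 ≤ tbar) (hlt : tbar < that) (hle : that ≤ T)
    (u : ℝ → EuclideanSpace ℝ (Fin n))
    (hu : ContinuousOn u (Set.Ico tbar that))
    (hcrit : ∀ t ∈ Set.Ico tbar that, gradient (f t) (u t) = 0) :
    let K : Set (EuclideanSpace ℝ (Fin n)) :=
      {x | ∃ s : ℕ → ℝ, (∀ k, s k ∈ Set.Ico tbar that) ∧ Monotone s ∧
        Tendsto s atTop (nhds that) ∧ Tendsto (fun k => u (s k)) atTop (nhds x)}
    K.Nonempty ∧ IsCompact K ∧ IsConnected K ∧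
    (∀ x ∈ K, gradient (f that) x = 0) ∧
    (that < T →
      (∀ t ∈ Set.Ico tbar that,
        LinearMap.det ((fderiv ℝ (gradient (f t)) (u t) :
          EuclideanSpace ℝ (Fin n) →L[ℝ] EuclideanSpace ℝ (Fin n)) :
          EuclideanSpace ℝ (Fin n) →ₗ[ℝ] EuclideanSpace ℝ (Fin n)) ≠ 0) →
      (¬ ∃ η > (0:ℝ), that + η ≤ T ∧ ∃ utilde : ℝ → EuclideanSpace ℝ (Fin n),
        ContinuousOn utilde (Set.Ico tbar (that + η)) ∧
        (∀ t ∈ Set.Ico tbar that, utilde t = u t) ∧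
        (∀ t ∈ Set.Ico tbar (that + η), gradient (f t) (utilde t) = 0 ∧
          LinearMap.det ((fderiv ℝ (gradient (f t)) (utilde t) :
            EuclideanSpace ℝ (Fin n) →L[ℝ] EuclideanSpace ℝ (Fin n)) :
            EuclideanSpace ℝ (Fin n) →ₗ[ℝ] EuclideanSpace ℝ (Fin n)) ≠ 0)) →
      ∀ x ∈ K,
        LinearMap.det ((fderiv ℝ (gradient (f that)) x :
          EuclideanSpace ℝ (Fin n) →L[ℝ] EuclideanSpace ℝ (Fin n)) :
          EuclideanSpace ℝ (Fin n) →ₗ[ℝ] EuclideanSpace ℝ (Fin n)) = 0) := by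
  intro K
  have hKeq : K = {x | MapClusterPt x (𝓝[<] that) u} := by
    ext x; exact aux_K_iff tbar that hlt u x
  -- regularity
  obtain ⟨hD1, hD1'⟩ := aux_partial hT (Function.uncurry f) 2 (by exact_mod_cast hf)
  set G : ℝ × EuclideanSpace ℝ (Fin n) → EuclideanSpace ℝ (Fin n) := fun p =>
    (InnerProductSpace.toDual ℝ (EuclideanSpace ℝ (Fin n))).symm
      ((fderivWithin ℝ (Function.uncurry f) (Icc 0 T ×ˢ univ) p) ∘L
        (ContinuousLinearMap.inr ℝ ℝ (EuclideanSpace ℝ (Fin n)))) with hGdef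
  have hG : ∀ t ∈ Icc 0 T, ∀ x, gradient (f t) x = G (t, x) := by
    intro t ht x
    have : fderiv ℝ (f t) x = _ := (hD1' t ht x).fderiv
    simp only [gradient, hGdef]
    rw [this]
  have hGc : ContDiffOn ℝ ((1 : ℕ) + 1) G (Icc 0 T ×ˢ univ) := by
    have := (InnerProductSpace.toDual ℝ (EuclideanSpace ℝ (Fin n))).symm.contDiff
      (n := 2) |>.comp_contDiffOn hD1
    norm_num
    exact this
  obtain ⟨hD2, hD2'⟩ := aux_partial hT G 1 hGc
  set A : ℝ × EuclideanSpace ℝ (Fin n) → EuclideanSpace ℝ (Fin n) →L[ℝ] EuclideanSpace ℝ (Fin n) :=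
    fun p => (fderivWithin ℝ G (Icc 0 T ×ˢ univ) p) ∘L
        (ContinuousLinearMap.inr ℝ ℝ (EuclideanSpace ℝ (Fin n))) with hAdef
  have hA : ∀ t ∈ Icc 0 T, ∀ x, fderiv ℝ (gradient (f t)) x = A (t, x) := by
    intro t ht x
    have h1 : gradient (f t) = fun y => G (t, y) := funext (hG t ht)
    rw [h1]
    exact (hD2' t ht x).fderiv
  have hIcc : ∀ t ∈ Ico tbar that, t ∈ Icc 0 T := fun t ht =>
    ⟨h0.trans ht.1, ht.2.le.trans hle⟩
  have hthat : that ∈ Icc 0 T := ⟨h0.trans hlt.le, hle⟩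
  -- boundedness
  have huB : ∀ t ∈ Ico tbar that, u t ∈ Metric.closedBall (0 : EuclideanSpace ℝ (Fin n))
      (Real.sqrt (a₀ / c₀)) := by
    intro t ht
    have h1 := hA1 t (hIcc t ht) (u t)
    rw [hcrit t ht, inner_zero_left] at h1
    rw [mem_closedBall_zero_iff]
    apply Real.le_sqrt_of_sq_le
    rw [le_div_iff₀ hc₀]
    linarith
  obtain ⟨hne, hco, hpre⟩ := aux_K tbar that hlt u hu _ (isCompact_closedBall _ _) huB
  have hKcrit : ∀ x ∈ K, gradient (f that) x = 0 := by
    rintro x ⟨s, hs, -, hst, hsx⟩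
    rw [hG that hthat]
    have hc : ContinuousWithinAt G (Icc 0 T ×ˢ univ) (that, x) :=
      hGc.continuousOn _ ⟨hthat, mem_univ _⟩
    have h1 : Tendsto (fun k => G (s k, u (s k))) atTop (𝓝 (G (that, x))) := by
      refine hc.tendsto.comp (tendsto_nhdsWithin_iff.2 ⟨hst.prodMk_nhds hsx, ?_⟩)
      exact Eventually.of_forall fun k => ⟨hIcc _ (hs k), mem_univ _⟩
    refine tendsto_nhds_unique h1 ?_
    have : (fun k => G (s k, u (s k))) = fun _ => 0 := by
      funext k
      rw [← hG _ (hIcc _ (hs k)), hcrit _ (hs k)]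
    rw [this]; exact tendsto_const_nhds
  refine ⟨hKeq ▸ hne, hKeq ▸ hco, ⟨hKeq ▸ hne, hKeq ▸ hpre⟩, hKcrit, ?_⟩
  intro hT' hdet hno x hx
  by_contra hxd
  apply hno
  rw [hA that hthat] at hxd
  have hSn : Icc (0:ℝ) T ×ˢ (univ : Set (EuclideanSpace ℝ (Fin n))) ∈ 𝓝 (that, x) :=
    prod_mem_nhds (Icc_mem_nhds (h0.trans_lt hlt) hT') univ_mem
  have hstr : HasStrictFDerivAt G (fderivWithin ℝ G (Icc 0 T ×ˢ univ) (that, x)) (that, x) := by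
    rw [fderivWithin_of_mem_nhds hSn]
    exact (hGc.contDiffAt hSn).hasStrictFDerivAt (by norm_num)
  have hinv : ((fderivWithin ℝ G (Icc 0 T ×ˢ univ) (that, x)) ∘L
      (ContinuousLinearMap.inr ℝ ℝ (EuclideanSpace ℝ (Fin n)))).IsInvertible := by
    refine ⟨(A (that, x)).toContinuousLinearEquivOfDetNeZero hxd, ?_⟩
    ext; rfl
  have hiff := hstr.eventually_apply_eq_iff_implicitFunctionOfProdDomain hinv
  have hev := hstr.eventually_apply_implicitFunctionOfProdDomain hinv
  have htd := hstr.tendsto_implicitFunctionOfProdDomain hinv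
  have hself := hiff.self_of_nhds
  set g := hstr.implicitFunctionOfProdDomain hinv
  have hgx : g that = x := hself.1 rfl
  have hG0 : G (that, x) = 0 := by rw [← hG that hthat]; exact hKcrit x hx
  simp only at hev htd
  -- K is a singleton
  have hiso : ∀ᶠ y in 𝓝 x, G (that, y) = 0 → y = x := by
    have hc : Tendsto (fun y : EuclideanSpace ℝ (Fin n) => (that, y)) (𝓝 x) (𝓝 (that, x)) :=
      (Continuous.prodMk_right that).tendsto x
    filter_upwards [hc.eventually hiff] with y hy h
    rw [← hgx]
    exact (hy.1 (h.trans hG0.symm)).symm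
  obtain ⟨W, hWsub, hWo, hxW⟩ := mem_nhds_iff.1 hiso
  have hKx : ∀ y ∈ K, y = x := by
    have hpK : IsPreconnected K := hKeq ▸ hpre
    intro y hy
    by_contra hyx
    obtain ⟨z, hzK, hzW, hzx⟩ := hpK W {x}ᶜ hWo isOpen_compl_singleton
      (fun z _ => by
        by_cases hz : z = x
        · left; rw [hz]; exact hxW
        · right; exact hz)
      ⟨x, hx, hxW⟩ ⟨y, hy, hyx⟩
    exact hzx (hWsub hzW (by rw [← hG that hthat]; exact hKcrit z hzK))
  have hlim : Tendsto u (𝓝[<] that) (𝓝 x) := by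
    intro V hV
    obtain ⟨V', hV'V, hV'o, hxV'⟩ := mem_nhds_iff.1 hV
    have := aux_ev tbar that hlt u _ (isCompact_closedBall _ _) huB V' hV'o (by
      intro y hy
      rw [hKx y (hKeq ▸ hy)]; exact hxV')
    exact this.mono fun t ht => hV'V ht
  -- continuation
  obtain ⟨L, s, hs, hLip⟩ :=
    (hstr.hasStrictFDerivAt_implicitFunctionOfProdDomain hinv).exists_lipschitzOnWith
  have hpair : Tendsto (fun t => (t, g t)) (𝓝 that) (𝓝 (that, x)) := tendsto_id.prodMk_nhds htd
  have hdetg : ∀ᶠ t in 𝓝 that, LinearMap.det (A (t, g t) :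
      EuclideanSpace ℝ (Fin n) →ₗ[ℝ] EuclideanSpace ℝ (Fin n)) ≠ 0 := by
    have hAc : ContinuousAt A (that, x) := hD2.continuousOn.continuousAt hSn
    have hdc : Continuous (fun B : EuclideanSpace ℝ (Fin n) →L[ℝ] EuclideanSpace ℝ (Fin n) =>
        LinearMap.det (B : EuclideanSpace ℝ (Fin n) →ₗ[ℝ] EuclideanSpace ℝ (Fin n))) :=
      ContinuousLinearMap.continuous_det
    exact ((hdc.tendsto _).comp (hAc.tendsto.comp hpair)).eventually_ne hxd
  obtain ⟨ε, hε, hP⟩ := Metric.eventually_nhds_iff.1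
    ((hev.and hdetg).and (show ∀ᶠ t in 𝓝 that, t ∈ s from hs))
  have hgc : ∀ t, dist t that < ε → ContinuousAt g t := by
    intro t ht
    have h1 : s ∈ 𝓝 t := mem_of_superset (Metric.isOpen_ball.mem_nhds
      (show t ∈ Metric.ball that ε from ht)) fun r hr => (hP hr).2
    exact hLip.continuousOn.continuousAt h1
  have hη1 : min ε (T - that) ≤ ε := min_le_left _ _
  have hη2 : min ε (T - that) ≤ T - that := min_le_right _ _
  have hη0 : 0 < min ε (T - that) := lt_min hε (by linarith)
  generalize min ε (T - that) = η at hη1 hη2 hη0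
  have hdist : ∀ t, that ≤ t → t < that + η → dist t that < ε := by
    intro t h1 h2
    rw [Real.dist_eq, abs_of_nonneg (by linarith)]
    linarith
  refine ⟨η, hη0, by linarith, fun t => if t < that then u t else g t, ?_, ?_, ?_⟩
  · intro t ht
    rcases lt_trichotomy t that with h | h | h
    · have h1 : ContinuousWithinAt u (Ico tbar (that + η)) t := by
        refine (hu t ⟨ht.1, h⟩).mono_of_mem_nhdsWithin ?_
        filter_upwards [self_mem_nhdsWithin, mem_nhdsWithin_of_mem_nhds (Iio_mem_nhds h)]
          with r hr1 hr2
        exact ⟨hr1.1, hr2⟩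
      refine h1.congr_of_eventuallyEq ?_ (if_pos h)
      filter_upwards [mem_nhdsWithin_of_mem_nhds (Iio_mem_nhds h)] with r hr
      exact if_pos hr
    · subst h
      refine ContinuousAt.continuousWithinAt ?_
      rw [continuousAt_iff_continuous_left'_right']
      constructor
      · have : Tendsto (fun r => if r < t then u r else g r) (𝓝[<] t) (𝓝 x) := by
          refine hlim.congr' ?_
          filter_upwards [self_mem_nhdsWithin] with r hr
          exact (if_pos hr).symm
        unfold ContinuousWithinAt
        simpa [hgx] using this
      · have h1 : ContinuousWithinAt g (Ioi t) t := (hgc t (by simpa using hε)).continuousWithinAt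
        refine h1.congr (fun r hr => if_neg (not_lt.2 (le_of_lt hr))) (if_neg (lt_irrefl _))
    · refine ContinuousAt.continuousWithinAt ?_
      refine (hgc t (hdist t h.le ht.2)).congr ?_
      filter_upwards [Ioi_mem_nhds h] with r hr
      exact (if_neg (not_lt.2 (le_of_lt hr))).symm
  · intro t ht
    exact if_pos ht.2
  · intro t ht
    by_cases h : t < that
    · simp only [if_pos h]
      exact ⟨hcrit t ⟨ht.1, h⟩, hdet t ⟨ht.1, h⟩⟩
    · simp only [if_neg h]
      have hp := hP (hdist t (not_lt.1 h) ht.2)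
      have htI : t ∈ Icc 0 T := ⟨h0.trans ht.1, by linarith [ht.2]⟩
      rw [hG t htI, hA t htI]
      exact ⟨hp.1.1.trans hG0, hp.1.2⟩
end

section
/- Under Assumption 1, let (x_ε)_{ε>0} be a bounded family in ℝⁿ and, for each ε > 0, let u_ε : [0,T] → ℝⁿ be the solution of ε u̇_ε(t) = −∇ₓf(t,u_ε(t)) with u_ε(0) = x_ε. Then ε u̇_ε → 0 strongly in L²([0,T];ℝⁿ) as ε → 0, i.e. ε² ∫₀ᵀ |u̇_ε(t)|² dt → 0 as ε → 0. -/
open Set Filter Topology intervalIntegral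
open scoped RealInnerProductSpace

/-- for solutions `u_ε` of `ε u̇_ε = −∇ₓf(t,u_ε)` with bounded initial
data, `ε u̇_ε → 0` strongly in `L²([0,T])` as `ε → 0`, i.e.
`ε² ∫₀ᵀ ‖u̇_ε‖² dt → 0`. -/
theorem eps_velocity_tendsto_zero_L2
    {n : ℕ} (hn : 1 ≤ n) {T : ℝ} (hT : 0 < T)
    (f : ℝ → EuclideanSpace ℝ (Fin n) → ℝ)
    (hf : ContDiffOn ℝ 3 (Function.uncurry f)
      (Set.Icc 0 T ×ˢ (Set.univ : Set (EuclideanSpace ℝ (Fin n)))))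
    {a₀ c₀ : ℝ} (ha₀ : 0 ≤ a₀) (hc₀ : 0 < c₀)
    (hA1 : ∀ t ∈ Set.Icc (0:ℝ) T, ∀ x : EuclideanSpace ℝ (Fin n),
      ⟪gradient (f t) x, x⟫ ≥ c₀ * ‖x‖ ^ 2 - a₀)
    (x : ℝ → EuclideanSpace ℝ (Fin n))
    (hxbdd : ∃ C : ℝ, ∀ ε : ℝ, 0 < ε → ‖x ε‖ ≤ C)
    (u u' : ℝ → ℝ → EuclideanSpace ℝ (Fin n))
    (hinit : ∀ ε : ℝ, 0 < ε → u ε 0 = x ε)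
    (hu' : ∀ ε : ℝ, 0 < ε → ContinuousOn (u' ε) (Set.Icc 0 T))
    (hode : ∀ ε : ℝ, 0 < ε → ∀ t ∈ Set.Icc (0:ℝ) T,
      HasDerivWithinAt (u ε) (u' ε t) (Set.Icc 0 T) t ∧
      ε • u' ε t = -(gradient (f t) (u ε t))) :
    Filter.Tendsto (fun ε : ℝ => ε ^ 2 * ∫ t in (0:ℝ)..T, ‖u' ε t‖ ^ 2)
      (nhdsWithin 0 (Set.Ioi 0)) (nhds 0) := by
  obtain ⟨C, hC⟩ := hxbdd
  set S : Set (ℝ × EuclideanSpace ℝ (Fin n)) := Set.Icc 0 T ×ˢ Set.univ with hS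
  have hU : UniqueDiffOn ℝ S := (uniqueDiffOn_Icc hT).prod uniqueDiffOn_univ
  set F := Function.uncurry f with hF
  have hFc : ContinuousOn F S := hf.continuousOn
  have hF'c : ContinuousOn (fderivWithin ℝ F S) S :=
    hf.continuousOn_fderivWithin hU (by norm_num)
  have hFd : ∀ p ∈ S, HasFDerivWithinAt F (fderivWithin ℝ F S p) S p := fun p hp =>
    ((hf.differentiableOn (by norm_num)) p hp).hasFDerivWithinAt
  -- partial derivative in x is the gradient
  have hgrad : ∀ t ∈ Set.Icc (0:ℝ) T, ∀ y v : EuclideanSpace ℝ (Fin n),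
      fderivWithin ℝ F S (t, y) (0, v) = ⟪gradient (f t) y, v⟫ := by
    intro t ht y v
    have h1 : HasFDerivAt (fun z : EuclideanSpace ℝ (Fin n) => (t, z))
        (ContinuousLinearMap.inr ℝ ℝ (EuclideanSpace ℝ (Fin n))) y :=
      hasFDerivAt_prodMk_right t y
    have h2 : HasFDerivWithinAt (f t) ((fderivWithin ℝ F S (t, y)).comp
        (ContinuousLinearMap.inr ℝ ℝ (EuclideanSpace ℝ (Fin n)))) Set.univ y :=
      HasFDerivWithinAt.comp (g := F) y (hFd (t, y) ⟨ht, Set.mem_univ _⟩)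
        h1.hasFDerivWithinAt (fun z _ => ⟨ht, Set.mem_univ _⟩)
    rw [hasFDerivWithinAt_univ] at h2
    have h3 := h2.differentiableAt.hasGradientAt.hasFDerivAt.unique h2
    have h4 := congrArg (fun L => L v) h3
    exact h4.symm
  -- uniform bound
  set Q : ℝ := max (C ^ 2) (a₀ / c₀) + 1 with hQ
  have hQ0 : 0 ≤ Q := by
    have : 0 ≤ C ^ 2 := sq_nonneg C
    have := le_max_left (C ^ 2) (a₀ / c₀)
    linarith
  have hQa : a₀ < c₀ * Q := by
    have h : a₀ / c₀ < Q := by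
      have := le_max_right (C ^ 2) (a₀ / c₀)
      linarith
    rw [div_lt_iff₀ hc₀] at h
    linarith
  have hbd : ∀ ε : ℝ, 0 < ε → ∀ t ∈ Set.Icc (0:ℝ) T, ‖u ε t‖ ^ 2 ≤ Q := by
    intro ε hε
    have hc : ContinuousOn (u ε) (Set.Icc 0 T) := fun t ht =>
      (hode ε hε t ht).1.continuousWithinAt
    refine image_le_of_deriv_right_lt_deriv_boundary (f := fun t => ‖u ε t‖ ^ 2)
      (f' := fun t => 2 * ⟪u ε t, u' ε t⟫) (B := fun _ => Q) (B' := fun _ => 0)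
      (hc.norm.pow 2) ?_ ?_ (fun _ => hasDerivAt_const _ _) ?_
    · intro t ht
      have h := (hode ε hε t ⟨ht.1, ht.2.le⟩).1.norm_sq
      exact h.mono_of_mem_nhdsWithin (Icc_mem_nhdsGE_of_mem ht)
    · have h := hC ε hε
      have := le_max_left (C ^ 2) (a₀ / c₀)
      have := pow_le_pow_left₀ (norm_nonneg _) h 2
      simp only [hinit ε hε]
      linarith
    · intro t ht he
      have ht' : t ∈ Set.Icc (0:ℝ) T := ⟨ht.1, ht.2.le⟩
      have h1 := hA1 t ht' (u ε t)
      have h2 := congrArg (fun w => ⟪w, u ε t⟫) (hode ε hε t ht').2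
      simp only [real_inner_smul_left, inner_neg_left] at h2
      have he : ‖u ε t‖ ^ 2 = Q := he
      rw [he] at h1
      have h3 : ε * ⟪u ε t, u' ε t⟫ < 0 := by
        rw [real_inner_comm]
        linarith
      have := (pos_iff_neg_of_mul_neg h3).1 hε
      show 2 * ⟪u ε t, u' ε t⟫ < 0
      linarith
  set K : Set (ℝ × EuclideanSpace ℝ (Fin n)) :=
    Set.Icc 0 T ×ˢ Metric.closedBall 0 (Real.sqrt Q) with hK
  have hKc : IsCompact K := isCompact_Icc.prod (isCompact_closedBall _ _)
  have hKS : K ⊆ S := Set.prod_mono le_rfl (Set.subset_univ _)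
  have huK : ∀ ε : ℝ, 0 < ε → ∀ t ∈ Set.Icc (0:ℝ) T, (t, u ε t) ∈ K := by
    intro ε hε t ht
    refine ⟨ht, ?_⟩
    rw [mem_closedBall_zero_iff]
    exact Real.le_sqrt_of_sq_le (hbd ε hε t ht)
  obtain ⟨M0, hM0⟩ := hKc.exists_bound_of_continuousOn (hFc.mono hKS)
  obtain ⟨M1, hM1⟩ := hKc.exists_bound_of_continuousOn
    ((hF'c.mono hKS).clm_apply (continuousOn_const (c := ((1:ℝ), (0 : EuclideanSpace ℝ (Fin n))))))
  have key : ∀ ε : ℝ, 0 < ε → ε * ∫ t in (0:ℝ)..T, ‖u' ε t‖ ^ 2 ≤ 2 * M0 + T * M1 := by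
    intro ε hε
    have hint : IntervalIntegrable (fun t => ‖u' ε t‖ ^ 2) MeasureTheory.volume 0 T := by
      apply ContinuousOn.intervalIntegrable
      rw [Set.uIcc_of_le hT.le]
      exact (hu' ε hε).norm.pow 2
    have hd : ∀ t ∈ Set.Icc (0:ℝ) T, HasDerivWithinAt (fun t => F (t, u ε t))
        (fderivWithin ℝ F S (t, u ε t) (1, u' ε t)) (Set.Icc 0 T) t := by
      intro t ht
      exact (hFd (t, u ε t) ⟨ht, Set.mem_univ _⟩).comp_hasDerivWithinAt (t := S) t
        ((hasDerivWithinAt_id t _).prodMk (hode ε hε t ht).1)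
        (fun s hs => ⟨hs, Set.mem_univ _⟩)
    have hφ : ContinuousOn (fun t => M1 - ε * ‖u' ε t‖ ^ 2) (Set.Icc 0 T) :=
      continuousOn_const.sub (continuousOn_const.mul ((hu' ε hε).norm.pow 2))
    have h := intervalIntegral.sub_le_integral_of_hasDeriv_right_of_le
      (g := fun t => F (t, u ε t)) (φ := fun t => M1 - ε * ‖u' ε t‖ ^ 2) hT.le
      (fun t ht => (hd t ht).continuousWithinAt)
      (fun t ht => (hd t ⟨ht.1.le, ht.2.le⟩).mono_of_mem_nhdsWithin
        (Icc_mem_nhdsGT_of_mem ⟨ht.1.le, ht.2⟩))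
      hφ.integrableOn_Icc (by
        intro t ht
        have ht' : t ∈ Set.Icc (0:ℝ) T := ⟨ht.1.le, ht.2.le⟩
        have e : ((1:ℝ), u' ε t) = (1, 0) + (0, u' ε t) := by simp
        rw [e, map_add, hgrad t ht']
        have h1 := (le_abs_self _).trans (hM1 _ (huK ε hε t ht'))
        have h2 : gradient (f t) (u ε t) = -(ε • u' ε t) := by
          rw [(hode ε hε t ht').2, neg_neg]
        rw [h2, inner_neg_left, real_inner_smul_left, real_inner_self_eq_norm_sq]
        linarith)
    rw [intervalIntegral.integral_sub (by simp) (hint.const_mul ε),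
      intervalIntegral.integral_const, intervalIntegral.integral_const_mul] at h
    have h1 := abs_le.1 (hM0 _ (huK ε hε T ⟨hT.le, le_rfl⟩))
    have h2 := abs_le.1 (hM0 _ (huK ε hε 0 ⟨le_rfl, hT.le⟩))
    simp only [smul_eq_mul, sub_zero] at h
    linarith [h1.1, h2.2]
  have hlim : Filter.Tendsto (fun ε : ℝ => ε * (2 * M0 + T * M1)) (nhdsWithin 0 (Set.Ioi 0))
      (nhds 0) := by
    have : Filter.Tendsto (fun ε : ℝ => ε * (2 * M0 + T * M1)) (nhds 0)
      (nhds (0 * (2 * M0 + T * M1))) := (continuous_id.mul continuous_const).tendsto 0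
    rw [zero_mul] at this
    exact this.mono_left nhdsWithin_le_nhds
  refine squeeze_zero' ?_ ?_ hlim
  · filter_upwards with ε
    exact mul_nonneg (sq_nonneg _)
      (intervalIntegral.integral_nonneg hT.le (fun t _ => sq_nonneg _))
  · filter_upwards [self_mem_nhdsWithin] with ε hε
    rw [pow_two, mul_assoc]
    exact mul_le_mul_of_nonneg_left (key ε hε) (le_of_lt hε)
end

section
/- Under Assumption 1, let 0 < t₁ ≤ T and let u : [0,t₁) → ℝⁿ be of class C¹ with ∇ₓf(t,u(t)) = 0 and ∇²ₓf(t,u(t)) positive definite for every t ∈ [0,t₁). For each ε > 0 let u_ε : [0,T] → ℝⁿ solve ε u̇_ε(t) = −∇ₓf(t,u_ε(t)), and assume u_ε(0) → u(0) as ε → 0. Then u_ε → u uniformly on every compact subset of [0,t₁) as ε → 0. -/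
open Set Filter Topology
open scoped RealInnerProductSpace

lemma partial_fderiv_aux {E W : Type*} [NormedAddCommGroup E] [NormedSpace ℝ E]
    [NormedAddCommGroup W] [NormedSpace ℝ W] {T : ℝ} (hT : 0 < T) (F : ℝ × E → W)
    {k : ℕ} (hF : ContDiffOn ℝ (k + 1) F (Set.Icc 0 T ×ˢ (Set.univ : Set E))) :
    ∃ D : ℝ × E → (E →L[ℝ] W), ContDiffOn ℝ k D (Set.Icc 0 T ×ˢ (Set.univ : Set E)) ∧
      ∀ t ∈ Set.Icc (0:ℝ) T, ∀ x : E, HasFDerivAt (fun x => F (t, x)) (D (t, x)) x := by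
  have hS : UniqueDiffOn ℝ (Set.Icc 0 T ×ˢ (Set.univ : Set E)) :=
    (uniqueDiffOn_Icc hT).prod uniqueDiffOn_univ
  refine ⟨fun p => (fderivWithin ℝ F (Set.Icc 0 T ×ˢ (Set.univ : Set E)) p).comp
    (ContinuousLinearMap.inr ℝ ℝ E), ?_, ?_⟩
  · exact (hF.fderivWithin hS le_rfl).clm_comp contDiffOn_const
  · intro t ht x
    have hd : DifferentiableWithinAt ℝ F (Set.Icc 0 T ×ˢ (Set.univ : Set E)) (t, x) :=
      hF.differentiableOn (by simp) (t, x) ⟨ht, trivial⟩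
    have h2 : HasFDerivAt (fun x : E => (t, x)) (ContinuousLinearMap.inr ℝ ℝ E) x :=
      hasFDerivAt_prodMk_right t x
    exact hd.hasFDerivWithinAt.comp_hasFDerivAt x h2
      (Filter.Eventually.of_forall fun y => ⟨ht, trivial⟩)

/-- if `u` is a `C¹` branch of nondegenerate local minima on `[0,t₁)`
and `u_ε` solves `ε u̇_ε = −∇ₓf(t,u_ε)` with `u_ε(0) → u(0)`, then `u_ε → u`
uniformly on every compact subset of `[0,t₁)`. -/
theorem convergence_on_compacts_before_first_critical_time
    {n : ℕ} (hn : 1 ≤ n) {T : ℝ} (hT : 0 < T)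
    (f : ℝ → EuclideanSpace ℝ (Fin n) → ℝ)
    (hf : ContDiffOn ℝ 3 (Function.uncurry f)
      (Set.Icc 0 T ×ˢ (Set.univ : Set (EuclideanSpace ℝ (Fin n)))))
    {a₀ c₀ : ℝ} (ha₀ : 0 ≤ a₀) (hc₀ : 0 < c₀)
    (hA1 : ∀ t ∈ Set.Icc (0:ℝ) T, ∀ x : EuclideanSpace ℝ (Fin n),
      ⟪gradient (f t) x, x⟫ ≥ c₀ * ‖x‖ ^ 2 - a₀)
    (t₁ : ℝ) (ht₁ : 0 < t₁) (ht₁T : t₁ ≤ T)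
    (u : ℝ → EuclideanSpace ℝ (Fin n))
    (hu : ContDiffOn ℝ 1 u (Set.Ico 0 t₁))
    (hcrit : ∀ t ∈ Set.Ico (0:ℝ) t₁, gradient (f t) (u t) = 0)
    (hpd : ∀ t ∈ Set.Ico (0:ℝ) t₁, ∀ y : EuclideanSpace ℝ (Fin n), y ≠ 0 →
      0 < ⟪(fderiv ℝ (gradient (f t)) (u t)) y, y⟫)
    (uε : ℝ → ℝ → EuclideanSpace ℝ (Fin n))
    (hode : ∀ ε : ℝ, 0 < ε → ∀ t ∈ Set.Icc (0:ℝ) T,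
      HasDerivWithinAt (uε ε) (-(ε⁻¹ • gradient (f t) (uε ε t))) (Set.Icc 0 T) t)
    (hinit : Tendsto (fun ε : ℝ => uε ε 0) (nhdsWithin 0 (Set.Ioi 0)) (nhds (u 0))) :
    ∀ K : Set ℝ, K ⊆ Set.Ico 0 t₁ → IsCompact K →
      TendstoUniformlyOn (fun ε t => uε ε t) u (nhdsWithin 0 (Set.Ioi 0)) K := by
  intro K hK hKc
  rcases K.eq_empty_or_nonempty with rfl | hKne
  · exact tendstoUniformlyOn_empty
  obtain ⟨b, hbK, hbmax⟩ := hKc.exists_isGreatest hKne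
  obtain ⟨hb0, hbt⟩ := hK hbK
  have hKb : K ⊆ Set.Icc 0 b := fun t ht => ⟨(hK ht).1, hbmax ht⟩
  have hsub : Set.Icc 0 b ⊆ Set.Ico 0 t₁ := fun t ht => ⟨ht.1, ht.2.trans_lt hbt⟩
  have hsubT : Set.Icc 0 b ⊆ Set.Icc 0 T := fun t ht => ⟨ht.1, by linarith [ht.2]⟩
  -- regularity
  obtain ⟨D, hDc, hD⟩ := partial_fderiv_aux hT (Function.uncurry f) (k := 2)
    (hf.of_le (by norm_num))
  let G : ℝ × EuclideanSpace ℝ (Fin n) → EuclideanSpace ℝ (Fin n) := fun p =>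
    (InnerProductSpace.toDual ℝ (EuclideanSpace ℝ (Fin n))).symm (D p)
  have hG : ∀ t ∈ Set.Icc (0:ℝ) T, ∀ x, gradient (f t) x = G (t, x) := by
    intro t ht x
    have : fderiv ℝ (f t) x = D (t, x) := (hD t ht x).fderiv
    simp only [gradient, this, G]
  have hGc : ContDiffOn ℝ 2 G (Set.Icc 0 T ×ˢ Set.univ) :=
    (InnerProductSpace.toDual ℝ (EuclideanSpace ℝ (Fin n))).symm.contDiff.comp_contDiffOn hDc
  obtain ⟨H, hHc, hH⟩ := partial_fderiv_aux hT G (k := 1) (hGc.of_le (by norm_num))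
  have hHeq : ∀ t ∈ Set.Icc (0:ℝ) T, ∀ x, fderiv ℝ (gradient (f t)) x = H (t, x) := by
    intro t ht x
    have : gradient (f t) = fun x => G (t, x) := funext (hG t ht)
    rw [this]
    exact (hH t ht x).fderiv
  have hHcont := hHc.continuousOn
  have hGcont := hGc.continuousOn
  have huc : ContinuousOn u (Set.Icc 0 b) := hu.continuousOn.mono hsub
  -- Hessian positive in a tube
  obtain ⟨δ, hδ, hδH⟩ : ∃ δ > 0, ∀ z : EuclideanSpace ℝ (Fin n), ‖z‖ < δ →
      ∀ t ∈ Set.Icc 0 b, ∀ y : EuclideanSpace ℝ (Fin n), ‖y‖ = 1 →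
        0 < ⟪H (t, u t + z) y, y⟫ := by
    have hc : IsCompact (Set.Icc 0 b ×ˢ Metric.sphere (0 : EuclideanSpace ℝ (Fin n)) 1) :=
      isCompact_Icc.prod (isCompact_sphere _ _)
    have := hc.eventually_forall_of_forall_eventually (x₀ := (0 : EuclideanSpace ℝ (Fin n)))
      (P := fun z q => q.1 ∈ Set.Icc 0 b → 0 < ⟪H (q.1, u q.1 + z) q.2, q.2⟫) (by
        rintro ⟨t, y⟩ ⟨ht, hy⟩
        have hcont : ContinuousOn (fun p : EuclideanSpace ℝ (Fin n) ×
            (ℝ × EuclideanSpace ℝ (Fin n)) =>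
              ⟪H (p.2.1, u p.2.1 + p.1) p.2.2, p.2.2⟫) {p | p.2.1 ∈ Set.Icc 0 b} := by
          have h1 : ContinuousOn (fun p : EuclideanSpace ℝ (Fin n) ×
            (ℝ × EuclideanSpace ℝ (Fin n)) => u p.2.1) {p | p.2.1 ∈ Set.Icc 0 b} :=
            huc.comp (by fun_prop) (fun p hp => hp)
          have h2 : ContinuousOn (fun p : EuclideanSpace ℝ (Fin n) ×
            (ℝ × EuclideanSpace ℝ (Fin n)) => H (p.2.1, u p.2.1 + p.1))
              {p | p.2.1 ∈ Set.Icc 0 b} :=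
            hHcont.comp (continuous_snd.fst.continuousOn.prodMk (h1.add continuous_fst.continuousOn)) (fun p hp => ⟨hsubT hp, trivial⟩)
          exact ContinuousOn.inner (𝕜 := ℝ) (h2.clm_apply continuous_snd.snd.continuousOn) continuous_snd.snd.continuousOn
        have hpos : 0 < ⟪H (t, u t + 0) y, y⟫ := by
          rw [add_zero, ← hHeq t (hsubT ht)]
          apply hpd t (hsub ht)
          rintro rfl
          simp at hy
        have := (hcont (0, (t, y)) ht).eventually (lt_mem_nhds hpos)
        exact eventually_nhdsWithin_iff.1 this)
    obtain ⟨δ, hδ, h⟩ := Metric.eventually_nhds_iff.1 this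
    refine ⟨δ, hδ, fun z hz t ht y hy => ?_⟩
    exact h (by simpa using hz) (t, y) ⟨ht, by simpa using hy⟩ ht
  have hGpos : ∀ z : EuclideanSpace ℝ (Fin n), ‖z‖ < δ → z ≠ 0 → ∀ t ∈ Set.Icc 0 b,
      0 < ⟪G (t, u t + z), z⟫ := by
    intro z hz hz0 t ht
    have hder : ∀ s : ℝ, HasDerivAt (fun s : ℝ => ⟪G (t, u t + s • z), z⟫)
        ⟪H (t, u t + s • z) z, z⟫ s := by
      intro s
      have h1 : HasDerivAt (fun s : ℝ => u t + s • z) z s := by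
        simpa using ((hasDerivAt_id s).smul_const z).const_add (u t)
      have h2 := (hH t (hsubT ht) (u t + s • z)).comp_hasDerivAt s h1
      simpa using h2.inner ℝ (hasDerivAt_const s z)
    obtain ⟨s, hs, hse⟩ := exists_hasDerivAt_eq_slope
      (fun s : ℝ => ⟪G (t, u t + s • z), z⟫) _ (zero_lt_one)
      (fun s _ => (hder s).continuousAt.continuousWithinAt) (fun s _ => hder s)
    have h0 : G (t, u t) = 0 := by rw [← hG t (hsubT ht), hcrit t (hsub ht)]
    simp only [one_smul, zero_smul, add_zero, h0, inner_zero_left, sub_zero, div_one] at hse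
    rw [← hse]
    have hzn : 0 < ‖z‖ := norm_pos_iff.2 hz0
    have := hδH (s • z) (by
      rw [norm_smul, Real.norm_eq_abs, abs_of_pos hs.1]
      nlinarith [hs.2]) t ht (‖z‖⁻¹ • z) (by
        rw [norm_smul, norm_inv, norm_norm, inv_mul_cancel₀ hzn.ne'])
    rw [map_smul, real_inner_smul_left, real_inner_smul_right] at this
    have hi : 0 < ‖z‖⁻¹ := inv_pos.2 hzn
    exact (pos_iff_pos_of_mul_pos (by exact this)).1 hi |> fun h =>
      (pos_iff_pos_of_mul_pos h).1 hi
  -- velocity bound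
  have hu' : ContinuousOn (derivWithin u (Set.Ico 0 t₁)) (Set.Icc 0 b) :=
    (hu.continuousOn_derivWithin (uniqueDiffOn_Ico 0 t₁) le_rfl).mono hsub
  obtain ⟨M, hM⟩ := isCompact_Icc.exists_bound_of_continuousOn hu'
  have hM0 : 0 ≤ M := (norm_nonneg _).trans (hM 0 ⟨le_rfl, hb0⟩)
  rw [Metric.tendstoUniformlyOn_iff]
  intro η₀ hη₀
  obtain ⟨η, hη, hηlt⟩ := exists_between (lt_min hη₀ hδ)
  have hηη₀ : η < η₀ := hηlt.trans_le (min_le_left _ _)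
  have hηδ : η < δ := hηlt.trans_le (min_le_right _ _)
  obtain ⟨m, hm, hmG⟩ : ∃ m, 0 < m ∧ ∀ p ∈ Set.Icc 0 b ×ˢ
      Metric.sphere (0 : EuclideanSpace ℝ (Fin n)) η, m ≤ ⟪G (p.1, u p.1 + p.2), p.2⟫ := by
    refine (isCompact_Icc.prod (isCompact_sphere _ _)).exists_forall_le' ?_ ?_
    · have h1 : ContinuousOn (fun p : ℝ × EuclideanSpace ℝ (Fin n) => u p.1)
          (Set.Icc 0 b ×ˢ Metric.sphere (0 : EuclideanSpace ℝ (Fin n)) η) :=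
        huc.comp (by fun_prop) (fun p hp => hp.1)
      have h2 : ContinuousOn (fun p : ℝ × EuclideanSpace ℝ (Fin n) => G (p.1, u p.1 + p.2))
          (Set.Icc 0 b ×ˢ Metric.sphere (0 : EuclideanSpace ℝ (Fin n)) η) :=
        hGcont.comp (continuous_fst.continuousOn.prodMk (h1.add continuous_snd.continuousOn)) (fun p hp => ⟨hsubT hp.1, trivial⟩)
      exact ContinuousOn.inner (𝕜 := ℝ) h2 continuous_snd.continuousOn
    · rintro ⟨t, z⟩ ⟨ht, hz⟩
      have hz : ‖z‖ = η := by simpa using hz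
      exact hGpos z (by linarith) (norm_pos_iff.1 (by linarith)) t ht
  have hε1 : ∀ᶠ ε : ℝ in nhdsWithin 0 (Set.Ioi 0), ε * (M * η) < m := by
    have : Tendsto (fun ε : ℝ => ε * (M * η)) (nhdsWithin 0 (Set.Ioi 0)) (nhds 0) := by
      have : Tendsto (fun ε : ℝ => ε * (M * η)) (nhds 0) (nhds (0 * (M * η))) :=
        (continuous_id.mul continuous_const).tendsto 0
      rw [zero_mul] at this
      exact this.mono_left nhdsWithin_le_nhds
    exact this.eventually (gt_mem_nhds hm)
  filter_upwards [hε1, self_mem_nhdsWithin, Metric.tendsto_nhds.1 hinit η hη] with ε hε hεp h0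
  have hεp : 0 < ε := hεp
  intro t ht
  have hderiv : ∀ s ∈ Set.Icc 0 b, HasDerivWithinAt (fun s => uε ε s - u s)
      (-(ε⁻¹ • gradient (f s) (uε ε s)) - derivWithin u (Set.Ico 0 t₁) s) (Set.Ico 0 t₁) s := by
    intro s hs
    refine ((hode ε hεp s (hsubT hs)).mono ?_).sub ?_
    · exact fun r hr => ⟨hr.1, by linarith [hr.2]⟩
    · exact (hu.differentiableOn (by simp) s (hsub hs)).hasDerivWithinAt
  have key := image_le_of_deriv_right_lt_deriv_boundary
    (f := fun s => ‖uε ε s - u s‖ ^ 2)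
    (f' := fun s => 2 * ⟪uε ε s - u s,
      -(ε⁻¹ • gradient (f s) (uε ε s)) - derivWithin u (Set.Ico 0 t₁) s⟫)
    (a := 0) (b := b) (B := fun _ => η ^ 2) (B' := fun _ => 0) ?_ ?_ ?_ ?_ ?_ (hKb ht)
  · rw [dist_comm, dist_eq_norm]
    exact lt_of_le_of_lt ((sq_le_sq₀ (norm_nonneg _) hη.le).1 key) hηη₀
  · intro s hs
    exact ((hderiv s hs).norm_sq.continuousWithinAt).mono hsub
  · intro s hs
    refine ((hderiv s ⟨hs.1, hs.2.le⟩).norm_sq).mono_of_mem_nhdsWithin ?_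
    exact mem_of_superset (Ico_mem_nhdsGE (hs.2.trans hbt)) (Set.Ico_subset_Ico_left hs.1)
  · rw [dist_eq_norm] at h0
    exact (sq_le_sq₀ (norm_nonneg _) hη.le).2 h0.le
  · exact fun s => hasDerivAt_const s _
  · intro s hs heq
    have hs' : s ∈ Set.Icc 0 b := ⟨hs.1, hs.2.le⟩
    have hn : ‖uε ε s - u s‖ = η := (sq_eq_sq₀ (norm_nonneg _) hη.le).1 heq
    have h1 := hmG (s, uε ε s - u s) ⟨hs', by simpa using hn⟩
    simp only [add_sub_cancel] at h1
    rw [← hG s (hsubT hs')] at h1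
    have h2 := hM s hs'
    have h3 := abs_real_inner_le_norm (uε ε s - u s) (derivWithin u (Set.Ico 0 t₁) s)
    rw [hn] at h3
    have h4 := neg_abs_le ⟪uε ε s - u s, derivWithin u (Set.Ico 0 t₁) s⟫
    have h5 : η * ‖derivWithin u (Set.Ico 0 t₁) s‖ ≤ η * M := by gcongr
    rw [inner_sub_right, inner_neg_right, real_inner_smul_right, real_inner_comm]
    have h6 : M * η < ε⁻¹ * m := by
      rw [inv_mul_eq_div, lt_div_iff₀ hεp]; linarith
    have h7 : ε⁻¹ * m ≤ ε⁻¹ * ⟪gradient (f s) (uε ε s), uε ε s - u s⟫ := by gcongr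
    rw [real_inner_comm] at h4 h3
    rw [real_inner_comm (uε ε s - u s)] at *
    linarith
end

section
/- Let 0 < τ ≤ T, let u : [0,τ] → ℝⁿ be of class C¹ with ∇ₓf(t,u(t)) = 0 for every t ∈ [0,τ], and let α, β, δ₀ > 0 be constants such that ∇²ₓf(t,x)y·y ≥ α|y|² for all t ∈ [0,τ], all y ∈ ℝⁿ and all x with |x − u(t)| < δ₀, and |u̇(t)|² ≤ β for all t ∈ [0,τ]. Let 0 < ε < 2α and let u_ε be a C¹ solution of ε u̇_ε(t) = −∇ₓf(t,u_ε(t)) on [0,τ]. If t* ∈ (0,τ] is such that |u_ε(t) − u(t)| < δ₀ for all t ∈ [0,t*), then for every t ∈ [0,t*) one has |u_ε(t) − u(t)|² ≤ (|u_ε(0) − u(0)|² − εβ/(2α−ε)) e^{−(2α/ε − 1)t} + εβ/(2α−ε). -/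
open Set Filter Topology
open scoped RealInnerProductSpace

theorem aux_mono {E : Type*} [NormedAddCommGroup E] [InnerProductSpace ℝ E]
    (G : E → E) (hG : Differentiable ℝ G) (a w : E) (α δ : ℝ) (ha : G a = 0) (hw : ‖w‖ < δ)
    (hh : ∀ x, ‖x - a‖ < δ → ∀ y, ⟪(fderiv ℝ G x) y, y⟫ ≥ α * ‖y‖ ^ 2) :
    α * ‖w‖ ^ 2 ≤ ⟪G (a + w), w⟫ := by
  have hd : ∀ s : ℝ, HasDerivAt (fun s : ℝ => ⟪G (a + s • w), w⟫ - s * (α * ‖w‖ ^ 2))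
      (⟪(fderiv ℝ G (a + s • w)) w, w⟫ - α * ‖w‖ ^ 2) s := by
    intro s
    have h1 : HasDerivAt (fun s : ℝ => a + s • w) w s := by
      simpa using ((hasDerivAt_id s).smul_const w).const_add a
    have h2 := (hG (a + s • w)).hasFDerivAt.comp_hasDerivAt s h1
    have h3 := h2.inner ℝ (hasDerivAt_const s w)
    have h4 := h3.sub ((hasDerivAt_id s).mul_const (α * ‖w‖ ^ 2))
    simp only [inner_zero_right, zero_add, one_mul] at h4
    exact h4
  have hm : MonotoneOn (fun s : ℝ => ⟪G (a + s • w), w⟫ - s * (α * ‖w‖ ^ 2)) (Icc 0 1) := by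
    apply monotoneOn_of_deriv_nonneg (convex_Icc 0 1)
    · exact fun s _ => (hd s).continuousAt.continuousWithinAt
    · exact fun s _ => (hd s).differentiableAt.differentiableWithinAt
    · intro s hs
      rw [interior_Icc] at hs
      rw [(hd s).deriv]
      have : ‖a + s • w - a‖ < δ := by
        rw [add_sub_cancel_left, norm_smul, Real.norm_of_nonneg hs.1.le]
        nlinarith [norm_nonneg w, hs.2]
      linarith [hh _ this w]
  have := hm (by simp) (by simp) (zero_le_one' ℝ)
  simp [ha] at this
  linarith

theorem aux_grad {n : ℕ} {T : ℝ} (f : ℝ → EuclideanSpace ℝ (Fin n) → ℝ)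
    (hf : ContDiffOn ℝ 3 (Function.uncurry f)
      (Set.Icc 0 T ×ˢ (Set.univ : Set (EuclideanSpace ℝ (Fin n)))))
    (t : ℝ) (ht : t ∈ Icc 0 T) : Differentiable ℝ (gradient (f t)) := by
  have h1 : ContDiff ℝ 3 (f t) := by
    rw [← contDiffOn_univ]
    have : ContDiffOn ℝ 3 (fun x : EuclideanSpace ℝ (Fin n) => (t, x)) univ :=
      (contDiff_const.prodMk contDiff_id).contDiffOn
    exact hf.comp this (fun x _ => ⟨ht, mem_univ _⟩)
  have h2 : Differentiable ℝ (fderiv ℝ (f t)) :=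
    (h1.fderiv_right (m := 1) (by norm_num)).differentiable (by norm_num)
  unfold gradient
  exact (InnerProductSpace.toDual ℝ (EuclideanSpace ℝ (Fin n))).symm.toContinuousLinearEquiv.differentiable.comp h2

/-- the quantitative Gronwall-type estimate
`‖u_ε(t) − u(t)‖² ≤ (‖u_ε(0) − u(0)‖² − εβ/(2α−ε)) e^{−(2α/ε − 1)t} + εβ/(2α−ε)`
as long as `u_ε` stays in the `δ₀`-tube around the equilibrium branch `u`. -/
theorem gronwall_estimate_along_branch
    {n : ℕ} (hn : 1 ≤ n) {T : ℝ} (hT : 0 < T)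
    (f : ℝ → EuclideanSpace ℝ (Fin n) → ℝ)
    (hf : ContDiffOn ℝ 3 (Function.uncurry f)
      (Set.Icc 0 T ×ˢ (Set.univ : Set (EuclideanSpace ℝ (Fin n)))))
    (τ : ℝ) (hτ : 0 < τ) (hτT : τ ≤ T)
    (u u' : ℝ → EuclideanSpace ℝ (Fin n))
    (hu : ∀ t ∈ Set.Icc (0:ℝ) τ, HasDerivWithinAt u (u' t) (Set.Icc 0 τ) t)
    (hu' : ContinuousOn u' (Set.Icc 0 τ))
    (hcrit : ∀ t ∈ Set.Icc (0:ℝ) τ, gradient (f t) (u t) = 0)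
    (α β δ₀ : ℝ) (hα : 0 < α) (hβ : 0 < β) (hδ₀ : 0 < δ₀)
    (hhess : ∀ t ∈ Set.Icc (0:ℝ) τ, ∀ x : EuclideanSpace ℝ (Fin n),
      ‖x - u t‖ < δ₀ → ∀ y : EuclideanSpace ℝ (Fin n),
        ⟪(fderiv ℝ (gradient (f t)) x) y, y⟫ ≥ α * ‖y‖ ^ 2)
    (hu'bd : ∀ t ∈ Set.Icc (0:ℝ) τ, ‖u' t‖ ^ 2 ≤ β)
    (ε : ℝ) (hε : 0 < ε) (hε2α : ε < 2 * α)
    (uε : ℝ → EuclideanSpace ℝ (Fin n))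
    (hode : ∀ t ∈ Set.Icc (0:ℝ) τ,
      HasDerivWithinAt uε (-(ε⁻¹ • gradient (f t) (uε t))) (Set.Icc 0 τ) t)
    (tstar : ℝ) (htstar : tstar ∈ Set.Ioc 0 τ)
    (htube : ∀ t ∈ Set.Ico (0:ℝ) tstar, ‖uε t - u t‖ < δ₀) :
    ∀ t ∈ Set.Ico (0:ℝ) tstar,
      ‖uε t - u t‖ ^ 2 ≤
        (‖uε 0 - u 0‖ ^ 2 - ε * β / (2 * α - ε)) * Real.exp (-(2 * α / ε - 1) * t) +
          ε * β / (2 * α - ε) := by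
  intro t ht
  have hk : 0 < 2 * α - ε := by linarith
  have hsub : ∀ s ∈ Icc 0 t, s ∈ Icc 0 τ := fun s hs =>
    ⟨hs.1, hs.2.trans (ht.2.le.trans htstar.2)⟩
  set C := ε * β / (2 * α - ε) with hC
  set k := 2 * α / ε - 1 with hkd
  have hkC : k * C = β := by rw [hC, hkd]; field_simp
  have hd : ∀ s ∈ Icc 0 τ, HasDerivWithinAt
      (fun s => (‖uε s - u s‖ ^ 2 - C) * Real.exp (k * s))
      ((2 * ⟪uε s - u s, -(ε⁻¹ • gradient (f s) (uε s)) - u' s⟫) * Real.exp (k * s)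
        + (‖uε s - u s‖ ^ 2 - C) * (Real.exp (k * s) * k)) (Icc 0 τ) s := by
    intro s hs
    have h1 := (((hode s hs).sub (hu s hs)).norm_sq).sub_const C
    have h2 : HasDerivAt (fun s => Real.exp (k * s)) (Real.exp (k * s) * k) s := by
      simpa using ((hasDerivAt_id s).const_mul k).exp
    exact h1.mul h2.hasDerivWithinAt
  have hanti : AntitoneOn (fun s => (‖uε s - u s‖ ^ 2 - C) * Real.exp (k * s)) (Icc 0 t) := by
    apply antitoneOn_of_hasDerivWithinAt_nonpos (convex_Icc 0 t)
      (f' := fun s => (2 * ⟪uε s - u s, -(ε⁻¹ • gradient (f s) (uε s)) - u' s⟫) * Real.exp (k * s)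
        + (‖uε s - u s‖ ^ 2 - C) * (Real.exp (k * s) * k))
    · exact fun s hs => (hd s (hsub s hs)).continuousWithinAt.mono hsub
    · exact fun s hs => (hd s (hsub s (interior_subset hs))).mono
        (interior_subset.trans hsub)
    · intro s hs
      have hs' := interior_subset hs
      have hsτ := hsub s hs'
      have hm := aux_mono (gradient (f s)) (aux_grad f hf s ⟨hsτ.1, hsτ.2.trans hτT⟩) (u s)
        (uε s - u s) α δ₀ (hcrit s hsτ) (htube s ⟨hs'.1, hs'.2.trans_lt ht.2⟩) (hhess s hsτ)
      rw [add_sub_cancel, real_inner_comm] at hm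
      have hb := hu'bd s hsτ
      have hn2 : 0 ≤ ‖(uε s - u s) + u' s‖ ^ 2 := by positivity
      rw [norm_add_sq_real] at hn2
      have hm2 := mul_le_mul_of_nonneg_left hm (inv_pos.2 hε).le
      have hk2 : k * ‖uε s - u s‖ ^ 2 = 2 * (ε⁻¹ * (α * ‖uε s - u s‖ ^ 2)) - ‖uε s - u s‖ ^ 2 := by
        rw [hkd]; field_simp
      have he := Real.exp_pos (k * s)
      simp only [inner_sub_right, inner_neg_right, inner_smul_right] at *
      have : 2 * (-(ε⁻¹ * ⟪uε s - u s, gradient (f s) (uε s)⟫) - ⟪uε s - u s, u' s⟫)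
          + (k * ‖uε s - u s‖ ^ 2 - k * C) ≤ 0 := by
        rw [hkC, hk2]; linarith
      nlinarith [mul_nonpos_of_nonpos_of_nonneg this he.le]
  have h := hanti (left_mem_Icc.2 ht.1) (right_mem_Icc.2 ht.1) ht.1
  simp only [mul_zero, Real.exp_zero, mul_one] at h
  have he := Real.exp_pos (-k * t)
  have hee : Real.exp (k * t) * Real.exp (-k * t) = 1 := by
    rw [← Real.exp_add]; simp
  have h' := mul_le_mul_of_nonneg_right h he.le
  rw [mul_assoc, hee, mul_one] at h'
  linarith
end

section
/- Under Assumption 1 and the stated setup, for every ε sufficiently small the set {t ∈ [τ₁,T] : |u_ε(t) − x₁| ≥ δ₁} is nonempty, and the exit times t_ε^{δ₁} := inf{t ∈ [τ₁,T] : |u_ε(t) − x₁| ≥ δ₁} satisfy t_ε^{δ₁} → t₁ as ε → 0. -/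
open Set Filter Topology
open scoped RealInnerProductSpace

namespace ExitAux

variable {E : Type*} [NormedAddCommGroup E] [InnerProductSpace ℝ E] [CompleteSpace E]
  [ProperSpace E]
variable {V : Type*} [NormedAddCommGroup V] [NormedSpace ℝ V]

lemma uds {T : ℝ} (hT : 0 < T) :
    UniqueDiffOn ℝ (Icc 0 T ×ˢ (univ : Set E)) :=
  (uniqueDiffOn_Icc hT).prod uniqueDiffOn_univ

lemma partial_hasFDerivAt {T : ℝ} (F : ℝ × E → V)
    (hF : DifferentiableOn ℝ F (Icc 0 T ×ˢ (univ : Set E))) {t : ℝ} (ht : t ∈ Icc 0 T) (x : E) :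
    HasFDerivAt (fun y => F (t, y))
      ((fderivWithin ℝ F (Icc 0 T ×ˢ (univ : Set E)) (t, x)).comp
        (ContinuousLinearMap.inr ℝ ℝ E)) x := by
  have h1 := (hF (t, x) ⟨ht, mem_univ _⟩).hasFDerivWithinAt
  have h2 : HasFDerivWithinAt (fun y : E => (t, y)) (ContinuousLinearMap.inr ℝ ℝ E) univ x :=
    (hasFDerivAt_prodMk_right t x).hasFDerivWithinAt
  have := h1.comp x h2 (fun y _ => ⟨ht, mem_univ _⟩)
  exact hasFDerivWithinAt_univ.1 this

noncomputable def G (F : ℝ × E → ℝ) (T : ℝ) (p : ℝ × E) : E :=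
  (InnerProductSpace.toDual ℝ E).symm
    ((fderivWithin ℝ F (Icc 0 T ×ˢ (univ : Set E)) p).comp (ContinuousLinearMap.inr ℝ ℝ E))

lemma G_contDiffOn {T : ℝ} (hT : 0 < T) (F : ℝ × E → ℝ)
    (hF : ContDiffOn ℝ 3 F (Icc 0 T ×ˢ (univ : Set E))) :
    ContDiffOn ℝ 2 (G F T) (Icc 0 T ×ˢ (univ : Set E)) := by
  have h1 : ContDiffOn ℝ 2 (fderivWithin ℝ F (Icc 0 T ×ˢ (univ : Set E)))
      (Icc 0 T ×ˢ (univ : Set E)) := hF.fderivWithin (uds hT) (by norm_num)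
  have h2 := h1.clm_comp (contDiffOn_const (c := ContinuousLinearMap.inr ℝ ℝ E))
  exact (InnerProductSpace.toDual ℝ E).symm.contDiff.comp_contDiffOn h2

lemma gradient_eq {T : ℝ} (f : ℝ → E → ℝ)
    (hF : ContDiffOn ℝ 3 (Function.uncurry f) (Icc 0 T ×ˢ (univ : Set E)))
    {t : ℝ} (ht : t ∈ Icc 0 T) (x : E) :
    gradient (f t) x = G (Function.uncurry f) T (t, x) := by
  have := partial_hasFDerivAt (Function.uncurry f) (hF.differentiableOn (by norm_num)) ht x
  unfold gradient G
  rw [← this.fderiv]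
  rfl

lemma inner_G (F : ℝ × E → ℝ) (T : ℝ) (p : ℝ × E) (y : E) :
    ⟪G F T p, y⟫ = fderivWithin ℝ F (Icc 0 T ×ˢ (univ : Set E)) p (0, y) := by
  simp [G]

/-- upper bound -/
lemma upper {T : ℝ} (hT : 0 < T) (F : ℝ × E → ℝ)
    (hF : ContDiffOn ℝ 3 F (Icc 0 T ×ˢ (univ : Set E)))
    {a b : ℝ} (ha : 0 ≤ a) (hab : a < b) (hb : b ≤ T) (x₁ : E) (δ : ℝ)
    (hnz : ∀ t ∈ Icc a b, ∀ x : E, ‖x - x₁‖ ≤ δ → G F T (t, x) ≠ 0)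
    (v : ℝ → ℝ → E)
    (hode : ∀ ε : ℝ, 0 < ε → ∀ t ∈ Icc (0:ℝ) T,
      HasDerivWithinAt (v ε) (-(ε⁻¹ • G F T (t, v ε t))) (Icc 0 T) t) :
    ∀ᶠ ε : ℝ in 𝓝[>] 0, ∃ t ∈ Icc a b, δ ≤ ‖v ε t - x₁‖ := by
  set S := Icc 0 T ×ˢ (univ : Set E) with hS
  set K := Icc a b ×ˢ Metric.closedBall x₁ δ with hK
  have hKc : IsCompact K := isCompact_Icc.prod (isCompact_closedBall _ _)
  have hsub : Icc a b ⊆ Icc 0 T := Icc_subset_Icc ha hb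
  have hKS : K ⊆ S := prod_mono hsub (subset_univ _)
  have hFc : ContinuousOn F K := hF.continuousOn.mono hKS
  have hGc : ContinuousOn (G F T) K := (G_contDiffOn hT F hF).continuousOn.mono hKS
  have hDc : ContinuousOn (fun p => fderivWithin ℝ F S p (1, 0)) K :=
    ((hF.continuousOn_fderivWithin (uds hT) (by norm_num)).clm_apply continuousOn_const).mono hKS
  obtain ⟨C, hC⟩ := hKc.exists_bound_of_continuousOn hFc
  obtain ⟨D, hD⟩ := hKc.exists_bound_of_continuousOn hDc
  obtain ⟨m, hm, hmK⟩ : ∃ m : ℝ, 0 < m ∧ ∀ p ∈ K, m ≤ ‖G F T p‖ ^ 2 := by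
    rcases K.eq_empty_or_nonempty with h | h
    · exact ⟨1, one_pos, by simp [h]⟩
    · obtain ⟨p, hp, hmin⟩ := hKc.exists_isMinOn h (hGc.norm.pow 2)
      refine ⟨‖G F T p‖ ^ 2, ?_, fun q hq => hmin hq⟩
      have := hnz p.1 hp.1 p.2 (by simpa [dist_eq_norm] using hp.2)
      have := norm_pos_iff.2 this
      positivity
  have hlim : Tendsto (fun ε : ℝ => ε⁻¹ * m) (𝓝[>] 0) atTop :=
    tendsto_inv_nhdsGT_zero.atTop_mul_const hm
  filter_upwards [hlim.eventually_gt_atTop (D + 2 * C / (b - a)), self_mem_nhdsWithin]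
    with ε h1 hε
  rw [mem_Ioi] at hε
  by_contra! hcon
  have hin : ∀ t ∈ Icc a b, (t, v ε t) ∈ K := fun t ht =>
    ⟨ht, by simpa [dist_eq_norm] using (hcon t ht).le⟩
  have hder : ∀ t ∈ Icc a b, HasDerivWithinAt (fun t => F (t, v ε t))
      (fderivWithin ℝ F S (t, v ε t) (1, 0) - ε⁻¹ * ‖G F T (t, v ε t)‖ ^ 2) (Icc 0 T) t := by
    intro t ht
    have e1 := (hF.differentiableOn (by norm_num) _ (hKS (hin t ht))).hasFDerivWithinAt
    have e2 : HasDerivWithinAt (fun t => (t, v ε t)) (1, -(ε⁻¹ • G F T (t, v ε t))) (Icc 0 T) t :=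
      (hasDerivWithinAt_id t _).prodMk (hode ε hε t (hsub ht))
    have e3 := e1.comp_hasDerivWithinAt t e2
      (show MapsTo (fun t => (t, v ε t)) (Icc 0 T) S from fun s hs => ⟨hs, mem_univ _⟩)
    refine e3.congr_deriv ?_
    have : ((1 : ℝ), -(ε⁻¹ • G F T (t, v ε t))) = (1, 0) + (0, -(ε⁻¹ • G F T (t, v ε t))) := by
      simp
    rw [this, map_add, ← inner_G, inner_neg_right, inner_smul_right, real_inner_self_eq_norm_sq]
    simp only [hS]
    ring
  obtain ⟨c, hc, hceq⟩ := exists_hasDerivAt_eq_slope (fun t => F (t, v ε t))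
    (fun t => fderivWithin ℝ F S (t, v ε t) (1, 0) - ε⁻¹ * ‖G F T (t, v ε t)‖ ^ 2) hab
    (fun t ht => ((hder t ht).continuousWithinAt).mono hsub)
    (fun t ht => (hder t (Ioo_subset_Icc_self ht)).hasDerivAt
      (Icc_mem_nhds (ha.trans_lt ht.1) (ht.2.trans_le hb)))
  have hcI := hin c (Ioo_subset_Icc_self hc)
  have b1 := (abs_le.1 (hD _ hcI)).2
  have b2 := hmK _ hcI
  have b3 := (abs_le.1 (hC _ (hin b (right_mem_Icc.2 hab.le)))).1
  have b4 := (abs_le.1 (hC _ (hin a (left_mem_Icc.2 hab.le)))).2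
  have b5 : ε⁻¹ * m ≤ ε⁻¹ * ‖G F T (c, v ε c)‖ ^ 2 :=
    mul_le_mul_of_nonneg_left b2 (inv_pos.2 hε).le
  have b6 : -(2 * C / (b - a)) ≤ (F (b, v ε b) - F (a, v ε a)) / (b - a) := by
    rw [← neg_div]
    exact div_le_div_of_nonneg_right (by linarith) (by linarith)
  linarith

/-- lower bound -/
lemma lower {T : ℝ} (hT : 0 < T) (F : ℝ × E → ℝ)
    (hF : ContDiffOn ℝ 3 F (Icc 0 T ×ˢ (univ : Set E)))
    {t₁ t' : ℝ} (ht' : 0 ≤ t') (ht₁ : t' < t₁) (ht₁T : t₁ < T)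
    (u : ℝ → E) (hu : ContDiffOn ℝ 1 u (Ico 0 t₁))
    (hcrit : ∀ t ∈ Ico (0:ℝ) t₁, G F T (t, u t) = 0)
    (hpd : ∀ t ∈ Ico (0:ℝ) t₁, ∀ y : E, y ≠ 0 →
      0 < ⟪fderiv ℝ (fun x => G F T (t, x)) (u t) y, y⟫)
    (v : ℝ → ℝ → E)
    (hode : ∀ ε : ℝ, 0 < ε → ∀ t ∈ Icc (0:ℝ) T,
      HasDerivWithinAt (v ε) (-(ε⁻¹ • G F T (t, v ε t))) (Icc 0 T) t)
    (hinit : Tendsto (fun ε : ℝ => v ε 0) (𝓝[>] 0) (𝓝 (u 0))) {r₀ : ℝ} (hr₀ : 0 < r₀) :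
    ∀ᶠ ε : ℝ in 𝓝[>] 0, ∀ t ∈ Icc 0 t', ‖v ε t - u t‖ < r₀ := by
  set S := Icc 0 T ×ˢ (univ : Set E) with hS
  set g := G F T with hg
  have hgC : ContDiffOn ℝ 2 g S := G_contDiffOn hT F hF
  set H : ℝ × E → (E →L[ℝ] E) := fun p =>
    (fderivWithin ℝ g S p).comp (ContinuousLinearMap.inr ℝ ℝ E) with hH
  have hHc : ContinuousOn H S :=
    (hgC.continuousOn_fderivWithin (uds hT) (by norm_num)).clm_comp continuousOn_const
  have hHd : ∀ t ∈ Icc 0 T, ∀ x : E, HasFDerivAt (fun y => g (t, y)) (H (t, x)) x :=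
    fun t ht x => partial_hasFDerivAt g (hgC.differentiableOn (by norm_num)) ht x
  have s1 : Icc 0 t' ⊆ Ico 0 t₁ := fun t ht => ⟨ht.1, ht.2.trans_lt ht₁⟩
  have s2 : Icc 0 t' ⊆ Icc 0 T := Icc_subset_Icc le_rfl (ht₁.trans ht₁T).le
  have huc : ContinuousOn u (Icc 0 t') := hu.continuousOn.mono s1
  -- tube
  obtain ⟨ρ, hρ, hpos⟩ : ∃ ρ > 0, ∀ z : E, ‖z‖ < ρ → ∀ q ∈ Icc 0 t' ×ˢ Metric.sphere (0:E) 1,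
      0 < ⟪H (q.1, u q.1 + z) q.2, q.2⟫ := by
    have key : ∀ᶠ z : E in 𝓝 0, ∀ q ∈ Icc 0 t' ×ˢ Metric.sphere (0:E) 1,
        (q.1 ∈ Icc 0 t' → 0 < ⟪H (q.1, u q.1 + z) q.2, q.2⟫) := by
      apply (isCompact_Icc.prod (isCompact_sphere _ _)).eventually_forall_of_forall_eventually
      rintro ⟨t, y⟩ ⟨ht, hy⟩
      have hc : ContinuousOn (fun p : E × (ℝ × E) => ⟪H (p.2.1, u p.2.1 + p.1) p.2.2, p.2.2⟫)
          {p | p.2.1 ∈ Icc 0 t'} := by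
        have c0 : ContinuousOn (fun p : E × (ℝ × E) => u p.2.1) {p | p.2.1 ∈ Icc 0 t'} :=
          huc.comp (by fun_prop) (fun p hp => hp)
        have c1 : ContinuousOn (fun p : E × (ℝ × E) => H (p.2.1, u p.2.1 + p.1))
            {p | p.2.1 ∈ Icc 0 t'} := by
          refine hHc.comp ?_ (fun p hp => ⟨s2 hp, mem_univ _⟩)
          exact ContinuousOn.prodMk (by fun_prop) (c0.add (by fun_prop))
        have c2 : ContinuousOn (fun p : E × (ℝ × E) => p.2.2) {p | p.2.1 ∈ Icc 0 t'} := by fun_prop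
        exact (c1.clm_apply c2).inner c2
      have hy0 : y ≠ 0 := by
        rintro rfl
        simp at hy
      have hp0 : 0 < ⟪H (t, u t + 0) y, y⟫ := by
        have := hpd t (s1 ht) y hy0
        rw [(hHd t (s2 ht) (u t)).fderiv] at this
        simpa using this
      have := (hc (0, (t, y)) ht).eventually (lt_mem_nhds hp0)
      have h3 := eventually_nhdsWithin_iff.1 this
      exact h3
    obtain ⟨ρ, hρ, h⟩ := Metric.eventually_nhds_iff.1 key
    exact ⟨ρ, hρ, fun z hz q hq => h (by simpa using hz) q hq hq.1⟩
  -- radius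
  obtain ⟨r, hr, hrρ, hrr₀⟩ : ∃ r > 0, r < ρ ∧ r < r₀ :=
    ⟨min ρ r₀ / 2, by positivity, by have := min_le_left ρ r₀; linarith,
      by have := min_le_right ρ r₀; linarith⟩
  have hposz : ∀ t ∈ Icc 0 t', ∀ z : E, ‖z‖ = r → 0 < ⟪g (t, u t + z), z⟫ := by
    intro t ht z hz
    have hd : ∀ s : ℝ, HasDerivAt (fun s : ℝ => ⟪g (t, u t + s • z), z⟫)
        ⟪H (t, u t + s • z) z, z⟫ s := by
      intro s
      have e1 : HasDerivAt (fun s : ℝ => u t + s • z) z s := by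
        simpa using ((hasDerivAt_id s).smul_const z).const_add (u t)
      have e2 := (hHd t (s2 ht) (u t + s • z)).comp_hasDerivAt s e1
      simpa using e2.inner ℝ (hasDerivAt_const s z)
    have hp : ∀ s ∈ Ioo (0:ℝ) 1, 0 < ⟪H (t, u t + s • z) z, z⟫ := by
      intro s hs
      have hsz : ‖s • z‖ < ρ := by
        rw [norm_smul, Real.norm_of_nonneg hs.1.le, hz]
        nlinarith [hs.2]
      have := hpos (s • z) hsz (t, r⁻¹ • z) ⟨ht, by
        simp [norm_smul, hz, abs_of_pos hr, hr.ne']⟩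
      simp only [map_smul, inner_smul_left, inner_smul_right] at this
      simp only [conj_trivial] at this
      have hri : 0 < r⁻¹ := inv_pos.2 hr
      exact pos_of_mul_pos_right (pos_of_mul_pos_right this hri.le) hri.le
    obtain ⟨c, hc, he⟩ := exists_hasDerivAt_eq_slope (fun s : ℝ => ⟪g (t, u t + s • z), z⟫)
      (fun s => ⟪H (t, u t + s • z) z, z⟫) one_pos
      (fun s _ => (hd s).continuousAt.continuousWithinAt) (fun s _ => hd s)
    have := hp c hc
    have h0 := hcrit t (s1 ht)
    simp only [zero_smul, one_smul, add_zero, h0, inner_zero_left, sub_zero, div_one] at he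
    linarith
  -- compactness
  set K := Icc 0 t' ×ˢ Metric.sphere (0:E) r with hK
  have hKc : IsCompact K := isCompact_Icc.prod (isCompact_sphere _ _)
  obtain ⟨m, hm, hmK⟩ : ∃ m : ℝ, 0 < m ∧ ∀ p ∈ K, m ≤ ⟪g (p.1, u p.1 + p.2), p.2⟫ := by
    rcases K.eq_empty_or_nonempty with h | h
    · exact ⟨1, one_pos, by simp [h]⟩
    · have hc : ContinuousOn (fun p : ℝ × E => ⟪g (p.1, u p.1 + p.2), p.2⟫) K := by
        have c0 : ContinuousOn (fun p : ℝ × E => u p.1) K :=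
          huc.comp (by fun_prop) (fun p hp => hp.1)
        have c1 : ContinuousOn (fun p : ℝ × E => g (p.1, u p.1 + p.2)) K :=
          hgC.continuousOn.comp (ContinuousOn.prodMk (by fun_prop) (c0.add (by fun_prop)))
            (fun p hp => ⟨s2 hp.1, mem_univ _⟩)
        exact c1.inner (by fun_prop)
      obtain ⟨p, hp, hmin⟩ := hKc.exists_isMinOn h hc
      exact ⟨_, hposz p.1 hp.1 p.2 (by simpa using hp.2), fun q hq => hmin hq⟩
  have hu'c : ContinuousOn (derivWithin u (Ico 0 t₁)) (Icc 0 t') :=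
    (hu.continuousOn_derivWithin (uniqueDiffOn_Ico _ _) le_rfl).mono s1
  obtain ⟨M, hM⟩ := isCompact_Icc.exists_bound_of_continuousOn hu'c
  have hlim : Tendsto (fun ε : ℝ => ε⁻¹ * m) (𝓝[>] 0) atTop :=
    tendsto_inv_nhdsGT_zero.atTop_mul_const hm
  filter_upwards [hlim.eventually_gt_atTop (M * r), self_mem_nhdsWithin,
    hinit.eventually (Metric.ball_mem_nhds _ hr)] with ε h1 hε h0
  rw [mem_Ioi] at hε
  rw [dist_eq_norm] at h0
  have hw : ∀ t ∈ Icc 0 t', HasDerivWithinAt (fun t => v ε t - u t)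
      (-(ε⁻¹ • g (t, v ε t)) - derivWithin u (Ico 0 t₁) t) (Ico 0 t₁) t := by
    intro t ht
    exact ((hode ε hε t (s2 ht)).mono (fun s hs => ⟨hs.1, (hs.2.trans ht₁T).le⟩)).sub
      ((hu.differentiableOn (by norm_num) t (s1 ht)).hasDerivWithinAt)
  have hw2 := fun t ht => (hw t ht).norm_sq
  have hle : ∀ ⦃t⦄, t ∈ Icc 0 t' → ‖v ε t - u t‖ ^ 2 ≤ r ^ 2 := by
    refine image_le_of_deriv_right_lt_deriv_boundary (B := fun _ => r ^ 2) (B' := fun _ => 0)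
      (fun t ht => ((hw2 t ht).continuousWithinAt).mono s1)
      (fun t ht => (hw2 t (Ico_subset_Icc_self ht)).mono_of_mem_nhdsWithin ?_)
      (by gcongr) (fun _ => hasDerivAt_const _ _) ?_
    · exact mem_of_superset (Ico_mem_nhdsGE (ht.2.trans ht₁))
        (Ico_subset_Ico_left ht.1)
    · intro t ht heq
      have htI := Ico_subset_Icc_self ht
      have hn : ‖v ε t - u t‖ = r := by
        have := (sq_eq_sq₀ (norm_nonneg _) hr.le).1 heq
        exact this
      have k1 := hmK (t, v ε t - u t) ⟨htI, by simpa using hn⟩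
      simp only [add_sub_cancel] at k1
      have k2 : -⟪v ε t - u t, derivWithin u (Ico 0 t₁) t⟫ ≤ r * M := by
        have := abs_real_inner_le_norm (v ε t - u t) (derivWithin u (Ico 0 t₁) t)
        have h2 := (abs_le.1 this).1
        have h3 : ‖v ε t - u t‖ * ‖derivWithin u (Ico 0 t₁) t‖ ≤ r * M := by
          rw [hn]
          exact mul_le_mul_of_nonneg_left (hM t htI) hr.le
        linarith
      rw [inner_sub_right, inner_neg_right, inner_smul_right, real_inner_comm]
      have k3 := mul_le_mul_of_nonneg_left k1 (inv_pos.2 hε).le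
      linarith
  intro t ht
  exact (abs_le_of_sq_le_sq' (hle ht) hr.le).2.trans_lt hrr₀

end ExitAux

/-- for `ε` small the solution `u_ε` eventually leaves the ball
`B(x₁,δ₁)` after time `τ₁`, and the exit times
`t_ε^{δ₁} = inf {t ∈ [τ₁,T] : ‖u_ε(t) − x₁‖ ≥ δ₁}` converge to `t₁` as `ε → 0`. -/
theorem exit_times_tendsto_critical_time
    {n : ℕ} (hn : 1 ≤ n) {T : ℝ} (hT : 0 < T)
    (f : ℝ → EuclideanSpace ℝ (Fin n) → ℝ)
    (hf : ContDiffOn ℝ 3 (Function.uncurry f)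
      (Set.Icc 0 T ×ˢ (Set.univ : Set (EuclideanSpace ℝ (Fin n)))))
    {a₀ c₀ : ℝ} (ha₀ : 0 ≤ a₀) (hc₀ : 0 < c₀)
    (hA1 : ∀ t ∈ Set.Icc (0:ℝ) T, ∀ x : EuclideanSpace ℝ (Fin n),
      ⟪gradient (f t) x, x⟫ ≥ c₀ * ‖x‖ ^ 2 - a₀)
    (t₁ : ℝ) (ht₁ : 0 < t₁) (ht₁T : t₁ < T)
    (u : ℝ → EuclideanSpace ℝ (Fin n))
    (hu : ContDiffOn ℝ 1 u (Set.Ico 0 t₁))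
    (hcrit : ∀ t ∈ Set.Ico (0:ℝ) t₁, gradient (f t) (u t) = 0)
    (hpd : ∀ t ∈ Set.Ico (0:ℝ) t₁, ∀ y : EuclideanSpace ℝ (Fin n), y ≠ 0 →
      0 < ⟪(fderiv ℝ (gradient (f t)) (u t)) y, y⟫)
    (x₁ : EuclideanSpace ℝ (Fin n))
    (hx₁ : Tendsto u (nhdsWithin t₁ (Set.Iio t₁)) (nhds x₁))
    (r₁ R₁ : ℝ) (hr₁ : 0 < r₁) (hR₁ : 0 < R₁) (hr₁T : t₁ + r₁ ≤ T)
    (hnz : ∀ t ∈ Set.Ioc t₁ (t₁ + r₁), ∀ x : EuclideanSpace ℝ (Fin n),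
      ‖x - x₁‖ ≤ R₁ → gradient (f t) x ≠ 0)
    (δ₁ : ℝ) (hδ₁ : 0 < δ₁) (hδ₁R₁ : δ₁ < R₁)
    (τ₁ : ℝ) (hτ₁ : τ₁ ∈ Set.Ioo 0 t₁)
    (hτ₁u : ∀ t ∈ Set.Ico τ₁ t₁, ‖u t - x₁‖ < δ₁ / 4)
    (uε : ℝ → ℝ → EuclideanSpace ℝ (Fin n))
    (hode : ∀ ε : ℝ, 0 < ε → ∀ t ∈ Set.Icc (0:ℝ) T,
      HasDerivWithinAt (uε ε) (-(ε⁻¹ • gradient (f t) (uε ε t))) (Set.Icc 0 T) t)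
    (hinit : Tendsto (fun ε : ℝ => uε ε 0) (nhdsWithin 0 (Set.Ioi 0)) (nhds (u 0))) :
    (∀ᶠ ε : ℝ in nhdsWithin 0 (Set.Ioi 0),
      {t : ℝ | t ∈ Set.Icc τ₁ T ∧ δ₁ ≤ ‖uε ε t - x₁‖}.Nonempty) ∧
    Tendsto (fun ε : ℝ => sInf {t : ℝ | t ∈ Set.Icc τ₁ T ∧ δ₁ ≤ ‖uε ε t - x₁‖})
      (nhdsWithin 0 (Set.Ioi 0)) (nhds t₁) := by
  have hF := hf
  have hode' : ∀ ε : ℝ, 0 < ε → ∀ t ∈ Icc (0:ℝ) T, HasDerivWithinAt (uε ε)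
      (-(ε⁻¹ • ExitAux.G (Function.uncurry f) T (t, uε ε t))) (Icc 0 T) t := by
    intro ε hε t ht
    rw [← ExitAux.gradient_eq f hf ht]
    exact hode ε hε t ht
  have hT1 : ∀ t ∈ Ico (0:ℝ) t₁, t ∈ Icc 0 T := fun t ht => ⟨ht.1, (ht.2.trans ht₁T).le⟩
  have hup : ∀ η, 0 < η → η ≤ r₁ → ∀ᶠ ε : ℝ in 𝓝[>] 0,
      ∃ t ∈ Icc (t₁ + η / 2) (t₁ + η), δ₁ ≤ ‖uε ε t - x₁‖ := by
    intro η hη hηr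
    refine ExitAux.upper hT (Function.uncurry f) hf (by linarith) (by linarith) (by linarith)
      x₁ δ₁ ?_ uε hode'
    intro t ht x hx
    rw [← ExitAux.gradient_eq f hf ⟨by linarith [ht.1], by linarith [ht.2]⟩]
    exact hnz t ⟨by linarith [ht.1], by linarith [ht.2]⟩ x (by linarith)
  have hlow : ∀ t', 0 ≤ t' → t' < t₁ → ∀ᶠ ε : ℝ in 𝓝[>] 0,
      ∀ t ∈ Icc 0 t', ‖uε ε t - u t‖ < δ₁ / 4 := by
    intro t' h0 h1
    refine ExitAux.lower hT (Function.uncurry f) hf h0 h1 ht₁T u hu ?_ ?_ uε hode' hinit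
      (by positivity)
    · intro t ht
      rw [← ExitAux.gradient_eq f hf (hT1 t ht)]
      exact hcrit t ht
    · intro t ht y hy
      have : (fun x => ExitAux.G (Function.uncurry f) T (t, x)) = gradient (f t) := by
        funext x
        rw [ExitAux.gradient_eq f hf (hT1 t ht)]
      rw [this]
      exact hpd t ht y hy
  have hne : ∀ᶠ ε : ℝ in 𝓝[>] 0,
      {t : ℝ | t ∈ Set.Icc τ₁ T ∧ δ₁ ≤ ‖uε ε t - x₁‖}.Nonempty := by
    filter_upwards [hup r₁ hr₁ le_rfl] with ε ⟨t, ht, h⟩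
    exact ⟨t, ⟨by linarith [ht.1, hτ₁.2], by linarith [ht.2]⟩, h⟩
  refine ⟨hne, tendsto_order.2 ⟨fun a ha => ?_, fun a ha => ?_⟩⟩
  · obtain ⟨t', h1, h2⟩ := exists_between (max_lt ha hτ₁.2)
    have h3 := (le_max_left a τ₁).trans_lt h1
    have h4 := (le_max_right a τ₁).trans_lt h1
    filter_upwards [hne, hlow t' (hτ₁.1.trans h4).le h2] with ε hε h
    refine h3.trans_le (le_csInf hε ?_)
    rintro t ⟨ht, hd⟩
    by_contra! hlt
    have k1 := h t ⟨hτ₁.1.le.trans ht.1, hlt.le⟩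
    have k2 := hτ₁u t ⟨ht.1, hlt.trans h2⟩
    have k3 := norm_sub_le_norm_sub_add_norm_sub (uε ε t) (u t) x₁
    linarith
  · have hη : 0 < min r₁ ((a - t₁) / 2) := lt_min hr₁ (by linarith)
    filter_upwards [hup _ hη (min_le_left _ _)] with ε ⟨t, ht, h⟩
    have k1 := min_le_left r₁ ((a - t₁) / 2)
    have k2 := min_le_right r₁ ((a - t₁) / 2)
    refine (csInf_le ⟨τ₁, fun s hs => hs.1.1⟩
      (show t ∈ {t : ℝ | t ∈ Set.Icc τ₁ T ∧ δ₁ ≤ ‖uε ε t - x₁‖} from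
        ⟨⟨by linarith [ht.1, hτ₁.2], by linarith [ht.2]⟩, h⟩)).trans_lt ?_
    linarith [ht.2]
end

section
/- Let g : ℝⁿ → ℝ be of class C² satisfying ∇g(x)·x ≥ c₀|x|² − a₀ for all x ∈ ℝⁿ (with a₀ ≥ 0, c₀ > 0), and assume that g has only finitely many critical points. Let w : ℝ → ℝⁿ be a solution of ẇ(s) = −∇g(w(s)), let x₁ be a critical point of g, and suppose there exists a sequence s_k → +∞ such that w(−s_k) → x₁ as k → ∞. Then lim_{s→−∞} w(s) = x₁. -/
open Set Filter Topology
open scoped RealInnerProductSpace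

/-- for a coercive `C²` function `g` with finitely many critical points,
if a solution `w` of `ẇ = −∇g(w)` has a subsequence `w(−s_k) → x₁` with `s_k → +∞`
and `x₁` a critical point, then `w(s) → x₁` as `s → −∞`. -/
theorem alpha_limit_is_critical_point
    {n : ℕ} (hn : 1 ≤ n)
    (g : EuclideanSpace ℝ (Fin n) → ℝ) (hg : ContDiff ℝ 2 g)
    {a₀ c₀ : ℝ} (ha₀ : 0 ≤ a₀) (hc₀ : 0 < c₀)
    (hcoer : ∀ x : EuclideanSpace ℝ (Fin n), ⟪gradient g x, x⟫ ≥ c₀ * ‖x‖ ^ 2 - a₀)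
    (hfin : {x : EuclideanSpace ℝ (Fin n) | gradient g x = 0}.Finite)
    (w : ℝ → EuclideanSpace ℝ (Fin n))
    (hw : ∀ s : ℝ, HasDerivAt w (-(gradient g (w s))) s)
    (x₁ : EuclideanSpace ℝ (Fin n)) (hx₁ : gradient g x₁ = 0)
    (s : ℕ → ℝ) (hs : Tendsto s atTop atTop)
    (hlim : Tendsto (fun k => w (-(s k))) atTop (nhds x₁)) :
    Tendsto w atBot (nhds x₁) := by
  have hgd : Differentiable ℝ g := hg.differentiable (by norm_num)
  have hgc : Continuous (gradient g) := by
    have h1 : Continuous (fderiv ℝ g) := hg.continuous_fderiv (by norm_num)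
    exact (InnerProductSpace.toDual ℝ (EuclideanSpace ℝ (Fin n))).symm.continuous.comp h1
  have hwc : Continuous w := continuous_iff_continuousAt.2 fun t => (hw t).continuousAt
  have hder : ∀ t, HasDerivAt (fun t => g (w t)) (-‖gradient g (w t)‖ ^ 2) t := by
    intro t
    have h1 := (hgd (w t)).hasGradientAt.hasFDerivAt.comp_hasDerivAt t (hw t)
    have h2 : (InnerProductSpace.toDual ℝ (EuclideanSpace ℝ (Fin n)) (gradient g (w t)))
        (-(gradient g (w t))) = -‖gradient g (w t)‖ ^ 2 := by
      rw [InnerProductSpace.toDual_apply_apply, inner_neg_right, real_inner_self_eq_norm_sq]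
    exact h2 ▸ h1
  have hanti : Antitone (fun t => g (w t)) := by
    apply antitone_of_deriv_nonpos (fun t => (hder t).differentiableAt)
    intro t
    rw [(hder t).deriv]
    nlinarith [sq_nonneg ‖gradient g (w t)‖]
  have hglim : Tendsto (fun k => g (w (-(s k)))) atTop (nhds (g x₁)) :=
    (hgd.continuous.tendsto x₁).comp hlim
  have hle : ∀ t, g (w t) ≤ g x₁ := by
    intro t
    apply ge_of_tendsto hglim
    filter_upwards [hs.eventually_ge_atTop (-t)] with k hk
    exact hanti (by linarith)
  have hcl : (({x | gradient g x = 0} \ {x₁})ᶜ : Set (EuclideanSpace ℝ (Fin n))) ∈ 𝓝 x₁ := by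
    apply (hfin.subset sdiff_subset).isClosed.isOpen_compl.mem_nhds
    simp
  obtain ⟨e1, he1, hball⟩ := Metric.nhds_basis_closedBall.mem_iff.1 hcl
  rw [Metric.tendsto_nhds]
  by_contra hcon
  push Not at hcon
  obtain ⟨e0, he0, hfreq⟩ := hcon
  obtain ⟨e, he, hee0, hee1⟩ : ∃ e : ℝ, 0 < e ∧ e ≤ e0 ∧ e ≤ e1 :=
    ⟨min e0 e1, lt_min he0 he1, min_le_left _ _, min_le_right _ _⟩
  have hK : IsCompact (Metric.closedBall x₁ e) := isCompact_closedBall _ _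
  obtain ⟨M0, hM0⟩ := hK.exists_bound_of_continuousOn hgc.continuousOn
  obtain ⟨M, hM, hMb⟩ : ∃ M : ℝ, 0 < M ∧ ∀ x ∈ Metric.closedBall x₁ e, ‖gradient g x‖ ≤ M :=
    ⟨max M0 1, by positivity, fun x hx => (hM0 x hx).trans (le_max_left _ _)⟩
  have hA : IsCompact (Metric.closedBall x₁ e ∩ {x | e / 2 ≤ dist x x₁}) :=
    hK.inter_right (isClosed_le continuous_const (by fun_prop))
  obtain ⟨m, hm, hmb⟩ := hA.exists_forall_le' (f := fun x => ‖gradient g x‖ ^ 2) (a := 0)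
    (by fun_prop) (by
      rintro x ⟨hx1, hx2⟩
      have h1 := hball (Metric.closedBall_subset_closedBall hee1 hx1)
      have h2 : x ≠ x₁ := by
        rintro rfl
        simp at hx2
        linarith
      have h3 : gradient g x ≠ 0 := fun h => h1 ⟨h, h2⟩
      positivity)
  have hδ : 0 < m * (e / (2 * M)) := by positivity
  obtain ⟨k0, hk0⟩ := (hglim.eventually (lt_mem_nhds (sub_lt_self (g x₁) hδ))).exists
  obtain ⟨t1, ht1e, ht1⟩ := (hfreq.and_eventually (eventually_le_atBot (-(s k0)))).exists
  obtain ⟨k1, hk1, hk1'⟩ := ((hs.eventually_ge_atTop (-t1)).and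
    (hlim.eventually (Metric.ball_mem_nhds x₁ (half_pos he)))).exists
  have ht1e' : e ≤ dist (w t1) x₁ := hee0.trans (by simpa using ht1e)
  set t0 := -(s k1) with ht0
  have h01 : t0 ≤ t1 := by rw [ht0]; linarith
  have hφ : Continuous fun t => dist (w t) x₁ := by fun_prop
  obtain ⟨b, ⟨hb1, hb2⟩, hbl⟩ := (isCompact_Icc.inter_right
    (isClosed_le continuous_const hφ) : IsCompact (Icc t0 t1 ∩ {t | e ≤ dist (w t) x₁})).exists_isLeast
    ⟨t1, ⟨h01, le_rfl⟩, ht1e'⟩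
  obtain ⟨a, ⟨ha1, ha2⟩, hag⟩ := (isCompact_Icc.inter_right
    (isClosed_le hφ continuous_const) : IsCompact (Icc t0 b ∩ {t | dist (w t) x₁ ≤ e / 2})).exists_isGreatest
    ⟨t0, ⟨le_rfl, hb1.1⟩, hk1'.le⟩
  have hlt : ∀ t, a ≤ t → t < b → dist (w t) x₁ < e := by
    intro t h1 h2
    by_contra h3
    have := hbl ⟨⟨ha1.1.trans h1, h2.le.trans hb1.2⟩, not_lt.1 h3⟩
    linarith
  have hgt : ∀ t, a < t → t < b → e / 2 < dist (w t) x₁ := by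
    intro t h1 h2
    by_contra h3
    have := hag ⟨⟨ha1.1.trans h1.le, h2.le⟩, not_lt.1 h3⟩
    linarith
  have hab : a ≤ b := ha1.2
  have hn1 : ‖w b - w a‖ ≤ M * (b - a) :=
    norm_image_sub_le_of_norm_deriv_le_segment' (f' := fun t => -(gradient g (w t)))
      (fun t _ => (hw t).hasDerivWithinAt)
      (fun t ht => by
        rw [norm_neg]
        exact hMb _ (hlt t ht.1 ht.2).le) b ⟨hab, le_rfl⟩
  have hn2 : g (w b) - g (w a) ≤ -m * (b - a) := by
    refine (convex_Icc a b).image_sub_le_mul_sub_of_deriv_le (f := fun t => g (w t))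
      (hgd.continuous.comp hwc).continuousOn
      (fun t _ => (hder t).differentiableAt.differentiableWithinAt) ?_ a ⟨le_rfl, hab⟩ b
      ⟨hab, le_rfl⟩ hab
    intro t ht
    rw [interior_Icc] at ht
    rw [(hder t).deriv]
    have := hmb (w t) ⟨(hlt t ht.1.le ht.2).le, (hgt t ht.1 ht.2).le⟩
    linarith
  have hn3 : e / 2 ≤ ‖w b - w a‖ := by
    rw [← dist_eq_norm]
    have h1 := dist_triangle (w b) (w a) x₁
    simp only [mem_setOf_eq] at ha2 hb2
    linarith
  have hn4 : e / (2 * M) ≤ b - a := by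
    rw [div_le_iff₀ (by positivity)]
    linarith
  have hn5 := mul_le_mul_of_nonneg_left hn4 hm.le
  have hn6 : g (w (-(s k0))) ≤ g (w b) := hanti (hb1.2.trans ht1)
  have hn7 := hle a
  linarith
end
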